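/- arXiv:1802.02602 — 3 statements merged into one kernel-verified Lean document; each statement's English description precedes it below -/
import Mathlib

section
/- Let a < b be reals, ω a weight on [a,b], and k, k' ∈ K_ω conjugate kernels. Let f ∈ L¹([a,b];ℝ) be such that there exist c ∈ ℝ and μ ∈ L¹([a,b];ℝ) with (I_a^{k'} f)(x) = c + ∫_a^x μ(t) dt for a.e. x ∈ [a,b]. Then, writing Δ(x) = δ_{k,𝟙}(x,a) = ∫_a^x k(x,z) ω(z) dz, for a.e. x ∈ [a,b] the function Δ is differentiable at x and I_a^k(ω⁻¹ μ)(x) = f(x) − c · (1/ω(x)) · Δ'(x); that is, I_a^k(D_a^{k'} f)(x) = f(x) − (I_a^{k'} f)(a) · (1/ω(x)) · (d/dx) δ_{k,𝟙}(x,a) for a.e. x ∈ [a,b]. -/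
open MeasureTheory Set

noncomputable section

/-- weight function on `[a,b]`: measurable, positive, with `ω` and `ω⁻¹` essentially bounded. -/
def IsWeight (a b : ℝ) (ω : ℝ → ℝ) : Prop :=
  Measurable ω ∧ (∀ x ∈ Icc a b, 0 < ω x) ∧
  essSup (fun x => ENNReal.ofReal (ω x)) (volume.restrict (Icc a b)) < ⊤ ∧
  essSup (fun x => ENNReal.ofReal (ω x)⁻¹) (volume.restrict (Icc a b)) < ⊤

/-- `F_k(y) = ∫_y^b k(x,y) ω(x) dx`. -/
def Fker (b : ℝ) (ω : ℝ → ℝ) (k : ℝ → ℝ → ℝ) (y : ℝ) : ℝ :=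
  ∫ x in y..b, k x y * ω x

/-- `G_k(y) = ∫_a^y k(y,x) ω(x) dx`. -/
def Gker (a : ℝ) (ω : ℝ → ℝ) (k : ℝ → ℝ → ℝ) (y : ℝ) : ℝ :=
  ∫ x in a..y, k y x * ω x

/-- membership in the kernel class `K_ω`. -/
def MemK (a b : ℝ) (ω : ℝ → ℝ) (k : ℝ → ℝ → ℝ) : Prop :=
  Measurable (Function.uncurry k) ∧
  (∀ x y : ℝ, a ≤ y → y < x → x ≤ b → 0 < k x y) ∧
  essSup (fun y => ENNReal.ofReal (Fker b ω k y)) (volume.restrict (Ico a b)) < ⊤ ∧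
  essSup (fun y => ENNReal.ofReal (Gker a ω k y)) (volume.restrict (Ioc a b)) < ⊤

/-- `δ_{k₁,k₂}(x,y) = ∫_y^x k₁(x,z) k₂(z,y) ω(z) dz`. -/
def deltaK (ω : ℝ → ℝ) (k₁ k₂ : ℝ → ℝ → ℝ) (x y : ℝ) : ℝ :=
  ∫ z in y..x, k₁ x z * k₂ z y * ω z

/-- `k₁ R k₂` : `0 < δ_{k₁,k₂}(x,y) < ∞` on `Ω` (finiteness as interval integrability). -/
def relR (a b : ℝ) (ω : ℝ → ℝ) (k₁ k₂ : ℝ → ℝ → ℝ) : Prop :=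
  ∀ x y : ℝ, a ≤ y → y < x → x ≤ b →
    0 < deltaK ω k₁ k₂ x y ∧
    IntervalIntegrable (fun z => k₁ x z * k₂ z y * ω z) volume y x

/-- conjugate kernels. -/
def Conjugate (a b : ℝ) (ω : ℝ → ℝ) (k k' : ℝ → ℝ → ℝ) : Prop :=
  ∀ x y : ℝ, a ≤ y → y < x → x ≤ b →
    deltaK ω k k' x y = 1 ∧ deltaK ω k' k x y = 1

/-- left-sided `k`-integral. -/
def Ia (a : ℝ) (ω : ℝ → ℝ) (k : ℝ → ℝ → ℝ) (f : ℝ → ℝ) (x : ℝ) : ℝ :=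
  ∫ y in a..x, k x y * f y * ω y

/-- right-sided `k`-integral. -/
def Ib (b : ℝ) (ω : ℝ → ℝ) (k : ℝ → ℝ → ℝ) (f : ℝ → ℝ) (x : ℝ) : ℝ :=
  ∫ y in x..b, k y x * f y * ω y

/-!
Write `k₁ ⋆ k₂` for `δ_{k₁,k₂}` and `g = ω⁻¹ μ`. Conjugacy reads `k ⋆ k' = k' ⋆ k = 𝟙`, so
associativity of `⋆` gives `k ⋆ 𝟙 = k ⋆ k' ⋆ k = 𝟙 ⋆ k`: the operators `I_a^k` and `I_a^𝟙` commute.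
Applying `I_a^k` to `I_a^{k'} f = c + I_a^𝟙 g` therefore yields `I_a^𝟙 f = c Δ + I_a^𝟙 (I_a^k g)`,
while `k ⋆ 𝟙 = 𝟙 ⋆ k` at `(x, a)` says `Δ(x) = ∫_a^x k(z, a) ω(z) dz`. Differentiating both
identities almost everywhere gives `f = c k(·, a) + I_a^k g` and `Δ' = k(·, a) ω`.

Commuting `I_a^k` and `I_a^𝟙` by Fubini needs `k ⋆ 𝟙` to be finite. Conjugacy forces this at every
`(x, y)` with `x < b`, which suffices for a statement holding almost everywhere on `[a, b]`.
-/

section KernelOperators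

open scoped ENNReal

variable {V X Y Z E : Type*} [MeasurableSpace Y] [MeasurableSpace Z]
  [NormedAddCommGroup E] [NormedSpace ℝ E] {ν : Measure Y} {ρ : Measure Z}
  {K : X → Y → ℝ≥0∞} {L : Y → Z → ℝ≥0∞} {M : Z → V → ℝ≥0∞} {x : X} {g : Z → E}

/-- The composition `(K ⋆ L)(x, y) = ∫ K(x, z) L(z, y) dν(z)` of two nonnegative kernels. It takes
values in `ℝ≥0∞`, so that Tonelli's theorem applies to it without integrability assumptions. -/
def kernelComp {X Y Z : Type*} [MeasurableSpace Y] (ν : Measure Y) (K : X → Y → ℝ≥0∞)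
    (L : Y → Z → ℝ≥0∞) (x : X) (y : Z) : ℝ≥0∞ :=
  ∫⁻ z, K x z * L z y ∂ν

/-- The integral operator `(T_K g)(x) = ∫ K(x, y) g(y) dν(y)` of a nonnegative kernel, with the
junk value `0` where the integral does not converge absolutely. -/
def kernelOp {X Y : Type*} [MeasurableSpace Y] (ν : Measure Y) (K : X → Y → ℝ≥0∞)
    (g : Y → E) (x : X) : E :=
  ∫ y, (K x y).toReal • g y ∂ν

theorem measurable_kernelComp_left [SFinite ρ] {v : V} (hL : Measurable (Function.uncurry L))
    (hM : Measurable fun z => M z v) : Measurable fun y => kernelComp ρ L M y v :=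
  (hL.mul (hM.comp measurable_snd)).lintegral_prod_right'

theorem kernelComp_assoc [SFinite ν] [SFinite ρ] (hK : ∀ x, Measurable (K x))
    (hL : Measurable (Function.uncurry L)) (hM : ∀ v, Measurable fun z => M z v) :
    kernelComp ρ (kernelComp ν K L) M = kernelComp ν K (kernelComp ρ L M) := by
  ext x v
  calc ∫⁻ z, (∫⁻ y, K x y * L y z ∂ν) * M z v ∂ρ
      = ∫⁻ z, ∫⁻ y, K x y * L y z * M z v ∂ν ∂ρ := by
        congr with z
        rw [lintegral_mul_const _ (by fun_prop)]
    _ = ∫⁻ y, ∫⁻ z, K x y * L y z * M z v ∂ρ ∂ν :=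
        lintegral_lintegral_swap <| AEMeasurable.mul (by fun_prop) (by fun_prop)
    _ = ∫⁻ y, K x y * ∫⁻ z, L y z * M z v ∂ρ ∂ν := by
        congr with y
        rw [← lintegral_const_mul _ (by fun_prop)]
        simp only [mul_assoc]

theorem kernelOp_congr_ae {f f' : Y → E} (h : f =ᵐ[ν] f') : kernelOp ν K f x = kernelOp ν K f' x :=
  integral_congr_ae <| h.mono fun y hy => congrArg ((K x y).toReal • ·) hy

theorem lintegral_mul_enorm_ne_top_of_le {F : Type*} [NormedAddCommGroup F] {h : Z → F}
    {κ : Z → ℝ≥0∞} {R : ℝ≥0∞} (hR : R ≠ ⊤) (hκ : ∀ y, κ y ≤ R) (hh : Integrable h ρ) :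
    ∫⁻ y, κ y * ‖h y‖ₑ ∂ρ ≠ ⊤ := by
  refine ne_top_of_le_ne_top (ENNReal.mul_ne_top hR hh.2.ne) ?_
  rw [← lintegral_const_mul' _ _ hR]
  gcongr with y
  exact hκ y

theorem integrable_prod_of_lintegral_kernelComp_ne_top [SFinite ν] [SFinite ρ]
    (hK : Measurable (K x)) (hL : Measurable (Function.uncurry L)) (hg : AEStronglyMeasurable g ρ)
    (hfin : ∫⁻ y, kernelComp ν K L x y * ‖g y‖ₑ ∂ρ ≠ ⊤) :
    Integrable (fun p : Y × Z => (K x p.1 * L p.1 p.2).toReal • g p.2) (ν.prod ρ) := by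
  have hKL : Measurable fun p : Y × Z => K x p.1 * L p.1 p.2 := by fun_prop
  have hmeas : AEStronglyMeasurable (fun p : Y × Z => (K x p.1 * L p.1 p.2).toReal • g p.2)
      (ν.prod ρ) := hKL.ennreal_toReal.aestronglyMeasurable.smul hg.comp_snd
  refine ⟨hmeas, ?_⟩
  rw [HasFiniteIntegral, lintegral_prod_symm _ hmeas.enorm]
  refine lt_of_le_of_lt (lintegral_mono fun y => ?_) hfin.lt_top
  rw [kernelComp, ← lintegral_mul_const _ (by fun_prop)]
  refine lintegral_mono fun z => ?_
  rw [enorm_smul, Real.enorm_of_nonneg ENNReal.toReal_nonneg]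
  gcongr
  exact ENNReal.ofReal_toReal_le

theorem integrable_toReal_smul_kernelOp [SFinite ν] [SFinite ρ]
    (hK : Measurable (K x)) (hL : Measurable (Function.uncurry L)) (hg : AEStronglyMeasurable g ρ)
    (hfin : ∫⁻ y, kernelComp ν K L x y * ‖g y‖ₑ ∂ρ ≠ ⊤) :
    Integrable (fun z => (K x z).toReal • kernelOp ρ L g z) ν := by
  have hint := (integrable_prod_of_lintegral_kernelComp_ne_top hK hL hg hfin).integral_prod_left
  simpa only [kernelOp, ENNReal.toReal_mul, mul_smul, integral_smul] using hint

theorem kernelOp_kernelOp [CompleteSpace E] [SFinite ν] [SFinite ρ]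
    (hK : Measurable (K x)) (hL : Measurable (Function.uncurry L)) (hg : AEStronglyMeasurable g ρ)
    (hfin : ∫⁻ y, kernelComp ν K L x y * ‖g y‖ₑ ∂ρ ≠ ⊤) :
    kernelOp ν K (kernelOp ρ L g) x = kernelOp ρ (kernelComp ν K L) g x := by
  have hint := integrable_prod_of_lintegral_kernelComp_ne_top hK hL hg hfin
  calc kernelOp ν K (kernelOp ρ L g) x
      = ∫ z, ∫ y, (K x z * L z y).toReal • g y ∂ρ ∂ν := by
        simp only [kernelOp, ENNReal.toReal_mul, mul_smul, integral_smul]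
    _ = ∫ y, ∫ z, (K x z * L z y).toReal • g y ∂ν ∂ρ := integral_integral_swap hint
    _ = kernelOp ρ (kernelComp ν K L) g x := by
        refine integral_congr_ae ?_
        have hKL (y : Z) : Measurable fun z => K x z * L z y := by fun_prop
        have hcomp : Measurable (kernelComp ν K L x) := by
          unfold kernelComp
          exact Measurable.lintegral_prod_left' (f := fun p : Y × Z => K x p.1 * L p.1 p.2)
            (by fun_prop)
        filter_upwards [ae_lt_top' (hcomp.aemeasurable.mul hg.enorm) hfin] with y hy
        rcases eq_or_ne (g y) 0 with hgy | hgy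
        · simp only [hgy, smul_zero, integral_zero]
        · have hy' : kernelComp ν K L x y ≠ ⊤ := fun h => hy.ne <| by
            simp only [Pi.mul_apply, h, ENNReal.top_mul (enorm_ne_zero.2 hgy)]
          rw [integral_smul_const, integral_toReal (hKL y).aemeasurable
            (ae_lt_top (hKL y) hy'), kernelComp]

end KernelOperators

section WeightMeasure

/-- A weaker form of `IsWeight`: the weight is only required to be integrable, not to be bounded
above and away from zero. -/
structure IsIntegrableWeight (a b : ℝ) (ω : ℝ → ℝ) : Prop where
  measurable : Measurable ω
  pos : ∀ x ∈ Icc a b, 0 < ω x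
  integrableOn : IntegrableOn ω (Icc a b)

/-- The measure `ω(x) dx` on `[a, b]`. -/
def weightMeasure (a b : ℝ) (ω : ℝ → ℝ) : Measure ℝ :=
  (volume.restrict (Icc a b)).withDensity fun x => ENNReal.ofReal (ω x)

instance (a b : ℝ) (ω : ℝ → ℝ) : SFinite (weightMeasure a b ω) := by
  unfold weightMeasure
  infer_instance

variable {a b : ℝ} {ω g : ℝ → ℝ} {s : Set ℝ}

theorem weightMeasure_absolutelyContinuous : weightMeasure a b ω ≪ volume.restrict (Icc a b) :=
  withDensity_absolutelyContinuous _ _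

theorem restrict_weightMeasure (hs : MeasurableSet s) (hsab : s ⊆ Icc a b) :
    (weightMeasure a b ω).restrict s =
      (volume.restrict s).withDensity fun x => ENNReal.ofReal (ω x) := by
  rw [weightMeasure, restrict_withDensity hs, Measure.restrict_restrict hs,
    inter_eq_left.2 hsab]

theorem IsWeight.integrableOn_mul (hω : IsWeight a b ω) (hg : IntegrableOn g (Icc a b)) :
    IntegrableOn (fun x => g x * ω x) (Icc a b) := by
  obtain ⟨hmeas, hpos, hbdd, -⟩ := hω
  refine Integrable.mul_bdd (c := (essSup (fun x => ENNReal.ofReal (ω x))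
    (volume.restrict (Icc a b))).toReal) hg hmeas.aestronglyMeasurable ?_
  filter_upwards [ENNReal.ae_le_essSup (μ := volume.restrict (Icc a b))
    (fun x => ENNReal.ofReal (ω x)), ae_restrict_mem measurableSet_Icc] with x hx hxab
  rw [Real.norm_of_nonneg (hpos x hxab).le]
  exact (ENNReal.ofReal_le_iff_le_toReal hbdd.ne).1 hx

theorem IsWeight.isIntegrableWeight (hω : IsWeight a b ω) : IsIntegrableWeight a b ω where
  measurable := hω.1
  pos := hω.2.1
  integrableOn := by
    simpa only [one_mul] using hω.integrableOn_mul (g := fun _ => 1) (by simp)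

namespace IsIntegrableWeight

theorem isFiniteMeasure (hω : IsIntegrableWeight a b ω) : IsFiniteMeasure (weightMeasure a b ω) :=
  isFiniteMeasure_withDensity_ofReal hω.integrableOn.2

theorem toReal_smul_ae_eq (hω : IsIntegrableWeight a b ω) (hs : MeasurableSet s)
    (hsab : s ⊆ Icc a b) :
    (fun x => (ENNReal.ofReal (ω x)).toReal • g x) =ᵐ[volume.restrict s] fun x => g x * ω x := by
  filter_upwards [ae_restrict_mem hs] with x hx
  rw [ENNReal.toReal_ofReal (hω.pos x (hsab hx)).le, smul_eq_mul, mul_comm]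

theorem setIntegral_weightMeasure (hω : IsIntegrableWeight a b ω) (hs : MeasurableSet s)
    (hsab : s ⊆ Icc a b) : ∫ x in s, g x ∂weightMeasure a b ω = ∫ x in s, g x * ω x := by
  rw [restrict_weightMeasure hs hsab, integral_withDensity_eq_integral_toReal_smul
    hω.measurable.ennreal_ofReal (ae_of_all _ fun _ => ENNReal.ofReal_lt_top)]
  exact integral_congr_ae (hω.toReal_smul_ae_eq hs hsab)

theorem integrableOn_weightMeasure_iff (hω : IsIntegrableWeight a b ω) (hs : MeasurableSet s)
    (hsab : s ⊆ Icc a b) :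
    IntegrableOn g s (weightMeasure a b ω) ↔ IntegrableOn (fun x => g x * ω x) s := by
  rw [IntegrableOn, restrict_weightMeasure hs hsab, integrable_withDensity_iff_integrable_smul'
    hω.measurable.ennreal_ofReal (ae_of_all _ fun _ => ENNReal.ofReal_lt_top)]
  exact integrable_congr (hω.toReal_smul_ae_eq hs hsab)

theorem integrable_weightMeasure_iff (hω : IsIntegrableWeight a b ω) :
    Integrable g (weightMeasure a b ω) ↔ IntegrableOn (fun x => g x * ω x) (Icc a b) := by
  rw [← hω.integrableOn_weightMeasure_iff measurableSet_Icc subset_rfl, IntegrableOn,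
    restrict_weightMeasure measurableSet_Icc subset_rfl, weightMeasure]

theorem integrable_inv_mul (hω : IsIntegrableWeight a b ω) (hg : IntegrableOn g (Icc a b)) :
    Integrable (fun x => (ω x)⁻¹ * g x) (weightMeasure a b ω) := by
  rw [hω.integrable_weightMeasure_iff]
  refine hg.congr_fun (fun x hx => ?_) measurableSet_Icc
  have := (hω.pos x hx).ne'
  field_simp

end IsIntegrableWeight

end WeightMeasure

section TruncatedKernel

open scoped ENNReal

/-- A weaker form of `MemK`: a measurable kernel, nonnegative on the triangle
`Ω = {(x, y) | a ≤ y < x ≤ b}`, without any bound on its marginals. -/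
structure IsNonnegKernel (a b : ℝ) (k : ℝ → ℝ → ℝ) : Prop where
  measurable : Measurable (Function.uncurry k)
  nonneg : ∀ x y : ℝ, a ≤ y → y < x → x ≤ b → 0 ≤ k x y

/-- The unit kernel `𝟙`. -/
def unitKernel : ℝ → ℝ → ℝ := fun _ _ => 1

/-- The kernel `k` restricted to the triangle `Ω = {(x, y) | a ≤ y < x ≤ b}`, extended by zero and
with values in `ℝ≥0∞`. It turns the Volterra integrals `Ia` and `deltaK`, which have variable
limits, into `kernelOp` and `kernelComp` over the fixed measure `weightMeasure a b ω`. -/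
def truncKernel (a b : ℝ) (k : ℝ → ℝ → ℝ) (x y : ℝ) : ℝ≥0∞ :=
  {p : ℝ × ℝ | a ≤ p.2 ∧ p.2 < p.1 ∧ p.1 ≤ b}.indicator (fun p => ENNReal.ofReal (k p.1 p.2)) (x, y)

variable {a b : ℝ} {ω g : ℝ → ℝ} {k k₁ k₂ : ℝ → ℝ → ℝ} {x y : ℝ}

theorem MemK.isNonnegKernel (hk : MemK a b ω k) : IsNonnegKernel a b k :=
  ⟨hk.1, fun x y hay hyx hxb => (hk.2.1 x y hay hyx hxb).le⟩

theorem isNonnegKernel_unitKernel : IsNonnegKernel a b unitKernel :=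
  ⟨measurable_const, fun _ _ _ _ _ => zero_le_one⟩

theorem truncKernel_of_mem (hay : a ≤ y) (hyx : y < x) (hxb : x ≤ b) :
    truncKernel a b k x y = ENNReal.ofReal (k x y) :=
  indicator_of_mem (by exact ⟨hay, hyx, hxb⟩) _

theorem truncKernel_of_notMem (h : ¬(a ≤ y ∧ y < x ∧ x ≤ b)) : truncKernel a b k x y = 0 :=
  indicator_of_notMem (a := (x, y)) h _

theorem truncKernel_unitKernel_of_mem (hay : a ≤ y) (hyx : y < x) (hxb : x ≤ b) :
    truncKernel a b unitKernel x y = 1 := by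
  rw [truncKernel_of_mem hay hyx hxb, unitKernel, ENNReal.ofReal_one]

theorem truncKernel_unitKernel_le_of_imp {C : ℝ≥0∞} (hC : a ≤ y → y < x → x ≤ b → 1 ≤ C) :
    truncKernel a b unitKernel x y ≤ C := by
  by_cases h : a ≤ y ∧ y < x ∧ x ≤ b
  · rw [truncKernel_unitKernel_of_mem h.1 h.2.1 h.2.2]
    exact hC h.1 h.2.1 h.2.2
  · simp only [truncKernel_of_notMem h, zero_le]

theorem truncKernel_unitKernel_le_one : truncKernel a b unitKernel x y ≤ 1 :=
  truncKernel_unitKernel_le_of_imp fun _ _ _ => le_rfl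

theorem truncKernel_unitKernel_mono {x' : ℝ} (hx : x ≤ x') (hx'b : x' ≤ b) :
    truncKernel a b unitKernel x y ≤ truncKernel a b unitKernel x' y :=
  truncKernel_unitKernel_le_of_imp fun hay hyx _ =>
    (truncKernel_unitKernel_of_mem hay (hyx.trans_le hx) hx'b).ge

theorem truncKernel_unitKernel_le_left :
    truncKernel a b unitKernel x y ≤ truncKernel a b unitKernel x a :=
  truncKernel_unitKernel_le_of_imp fun hay hyx hxb =>
    (truncKernel_unitKernel_of_mem le_rfl (hay.trans_lt hyx) hxb).ge

theorem IsNonnegKernel.measurable_truncKernel (hk : IsNonnegKernel a b k) :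
    Measurable (Function.uncurry (truncKernel a b k)) := by
  refine hk.measurable.ennreal_ofReal.indicator ?_
  exact (measurableSet_le measurable_const measurable_snd).inter
    ((measurableSet_lt measurable_snd measurable_fst).inter
      (measurableSet_le measurable_fst measurable_const))

theorem toReal_truncKernel_smul_eq_indicator (hk : IsNonnegKernel a b k) (hxb : x ≤ b) :
    (fun y => (truncKernel a b k x y).toReal • g y) = (Ico a x).indicator fun y => k x y * g y := by
  ext y
  by_cases hy : y ∈ Ico a x
  · rw [indicator_of_mem hy, truncKernel_of_mem hy.1 hy.2 hxb,
      ENNReal.toReal_ofReal (hk.nonneg x y hy.1 hy.2 hxb), smul_eq_mul]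
  · rw [indicator_of_notMem hy, truncKernel_of_notMem fun h => hy ⟨h.1, h.2.1⟩,
      ENNReal.toReal_zero, zero_smul]

theorem kernelOp_truncKernel (hω : IsIntegrableWeight a b ω) (hk : IsNonnegKernel a b k)
    (hx : x ∈ Icc a b) :
    kernelOp (weightMeasure a b ω) (truncKernel a b k) g x = Ia a ω k g x := by
  rw [kernelOp, toReal_truncKernel_smul_eq_indicator hk hx.2, integral_indicator measurableSet_Ico,
    hω.setIntegral_weightMeasure measurableSet_Ico (Ico_subset_Icc_self.trans
      (Icc_subset_Icc_right hx.2)), integral_Ico_eq_integral_Ioc, Ia,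
    intervalIntegral.integral_of_le hx.1]

theorem intervalIntegrable_iff_integrable_truncKernel_smul (hω : IsIntegrableWeight a b ω)
    (hk : IsNonnegKernel a b k) (hx : x ∈ Icc a b) :
    IntervalIntegrable (fun y => k x y * g y * ω y) volume a x ↔
      Integrable (fun y => (truncKernel a b k x y).toReal • g y) (weightMeasure a b ω) := by
  rw [toReal_truncKernel_smul_eq_indicator hk hx.2, integrable_indicator_iff measurableSet_Ico,
    hω.integrableOn_weightMeasure_iff measurableSet_Ico (Ico_subset_Icc_self.trans
      (Icc_subset_Icc_right hx.2)), integrableOn_Ico_iff_integrableOn_Ioo,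
    ← integrableOn_Ioc_iff_integrableOn_Ioo, intervalIntegrable_iff_integrableOn_Ioc_of_le hx.1]

theorem kernelOp_truncKernel_ae_eq (hω : IsIntegrableWeight a b ω) (hk : IsNonnegKernel a b k) :
    kernelOp (weightMeasure a b ω) (truncKernel a b k) g =ᵐ[weightMeasure a b ω] Ia a ω k g :=
  weightMeasure_absolutelyContinuous.ae_le <|
    (ae_restrict_mem measurableSet_Icc).mono fun _ hx => kernelOp_truncKernel hω hk hx

theorem Ia_unitKernel : Ia a ω unitKernel g x = ∫ y in a..x, g y * ω y := by
  simp only [Ia, unitKernel, one_mul]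

theorem Ia_unitKernel_inv_mul (hω : IsIntegrableWeight a b ω) (hx : x ∈ Icc a b) :
    Ia a ω unitKernel (fun y => (ω y)⁻¹ * g y) x = ∫ y in a..x, g y := by
  rw [Ia_unitKernel]
  refine intervalIntegral.integral_congr fun y hy => ?_
  rw [uIcc_of_le hx.1] at hy
  have := (hω.pos y ⟨hy.1, hy.2.trans hx.2⟩).ne'
  field_simp

theorem Ia_congr_ae {g' : ℝ → ℝ} (h : g =ᵐ[volume.restrict (Icc a b)] g') (hx : x ∈ Icc a b) :
    Ia a ω k g x = Ia a ω k g' x := by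
  rw [Ia, Ia, intervalIntegral.integral_of_le hx.1, intervalIntegral.integral_of_le hx.1]
  refine integral_congr_ae ?_
  filter_upwards [ae_restrict_of_ae_restrict_of_subset
    (Ioc_subset_Icc_self.trans (Icc_subset_Icc_right hx.2)) h] with y hy
  rw [hy]

theorem deltaK_unitKernel_left : deltaK ω unitKernel k x y = ∫ z in y..x, k z y * ω z := by
  simp only [deltaK, unitKernel, one_mul]

theorem deltaK_unitKernel_right : deltaK ω k unitKernel x y = ∫ z in y..x, k x z * ω z := by
  simp only [deltaK, unitKernel, mul_one]

/-- The function `δ_{k₁,k₂}` with values in `ℝ≥0∞`, extended by zero outside `Ω`; in contrast to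
`deltaK` it distinguishes a divergent integral from a vanishing one. -/
def extDeltaK (a b : ℝ) (ω : ℝ → ℝ) (k₁ k₂ : ℝ → ℝ → ℝ) : ℝ → ℝ → ℝ≥0∞ :=
  kernelComp (weightMeasure a b ω) (truncKernel a b k₁) (truncKernel a b k₂)

theorem extDeltaK_of_notMem (h : ¬(a ≤ y ∧ y < x ∧ x ≤ b)) :
    extDeltaK a b ω k₁ k₂ x y = 0 := by
  refine (lintegral_congr fun z => ?_).trans lintegral_zero
  by_cases hz : a ≤ z ∧ z < x ∧ x ≤ b
  · rw [truncKernel_of_notMem (x := z) fun hzy =>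
      h ⟨hzy.1, hzy.2.1.trans hz.2.1, hz.2.2⟩, mul_zero]
  · rw [truncKernel_of_notMem hz, zero_mul]

theorem extDeltaK_eq_setLIntegral (hω : IsIntegrableWeight a b ω) (hk₁ : IsNonnegKernel a b k₁)
    (hk₂ : IsNonnegKernel a b k₂) (hay : a ≤ y) (hxb : x ≤ b) :
    extDeltaK a b ω k₁ k₂ x y =
      ∫⁻ z in Ioo y x, ENNReal.ofReal (k₁ x z * k₂ z y * ω z) := by
  have hsub : Ioo y x ⊆ Icc a b := fun z hz => ⟨hay.trans hz.1.le, hz.2.le.trans hxb⟩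
  have hind : (fun z => truncKernel a b k₁ x z * truncKernel a b k₂ z y) =
      (Ioo y x).indicator fun z => ENNReal.ofReal (k₁ x z * k₂ z y) := by
    ext z
    by_cases hz : z ∈ Ioo y x
    · have haz := hay.trans hz.1.le
      rw [indicator_of_mem hz, truncKernel_of_mem haz hz.2 hxb,
        truncKernel_of_mem hay hz.1 (hz.2.le.trans hxb),
        ENNReal.ofReal_mul (hk₁.nonneg x z haz hz.2 hxb)]
    · rw [indicator_of_notMem hz, mul_eq_zero]
      by_cases hyz : y < z
      · exact Or.inl (truncKernel_of_notMem fun h => hz ⟨hyz, h.2.1⟩)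
      · exact Or.inr (truncKernel_of_notMem fun h => hyz h.2.1)
  have hmeas : Measurable fun z => k₁ x z * k₂ z y :=
    hk₁.measurable.of_uncurry_left.mul hk₂.measurable.of_uncurry_right
  rw [extDeltaK, kernelComp, hind, lintegral_indicator measurableSet_Ioo,
    restrict_weightMeasure measurableSet_Ioo hsub, lintegral_withDensity_eq_lintegral_mul _
      hω.measurable.ennreal_ofReal hmeas.ennreal_ofReal]
  refine setLIntegral_congr_fun measurableSet_Ioo fun z hz => ?_
  rw [Pi.mul_apply, mul_comm, ENNReal.ofReal_mul' (hω.pos z (hsub hz)).le]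

theorem deltaK_integrand_nonneg (hω : IsIntegrableWeight a b ω) (hk₁ : IsNonnegKernel a b k₁)
    (hk₂ : IsNonnegKernel a b k₂) (hay : a ≤ y) (hxb : x ≤ b) :
    0 ≤ᵐ[volume.restrict (Ioo y x)] fun z => k₁ x z * k₂ z y * ω z := by
  filter_upwards [ae_restrict_mem measurableSet_Ioo] with z hz
  have haz := hay.trans hz.1.le
  have hzb := hz.2.le.trans hxb
  exact mul_nonneg (mul_nonneg (hk₁.nonneg x z haz hz.2 hxb) (hk₂.nonneg z y hay hz.1 hzb))
    (hω.pos z ⟨haz, hzb⟩).le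

theorem measurable_deltaK_integrand (hω : IsIntegrableWeight a b ω) (hk₁ : IsNonnegKernel a b k₁)
    (hk₂ : IsNonnegKernel a b k₂) : Measurable fun z => k₁ x z * k₂ z y * ω z :=
  (hk₁.measurable.of_uncurry_left.mul hk₂.measurable.of_uncurry_right).mul hω.measurable

theorem deltaK_eq_toReal_extDeltaK (hω : IsIntegrableWeight a b ω) (hk₁ : IsNonnegKernel a b k₁)
    (hk₂ : IsNonnegKernel a b k₂) (hay : a ≤ y) (hyx : y ≤ x) (hxb : x ≤ b) :
    deltaK ω k₁ k₂ x y = (extDeltaK a b ω k₁ k₂ x y).toReal := by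
  rw [extDeltaK_eq_setLIntegral hω hk₁ hk₂ hay hxb, deltaK, intervalIntegral.integral_of_le hyx,
    integral_Ioc_eq_integral_Ioo, integral_eq_lintegral_of_nonneg_ae
      (deltaK_integrand_nonneg hω hk₁ hk₂ hay hxb)
      (measurable_deltaK_integrand hω hk₁ hk₂).aestronglyMeasurable]

theorem intervalIntegrable_deltaK_integrand_iff (hω : IsIntegrableWeight a b ω)
    (hk₁ : IsNonnegKernel a b k₁) (hk₂ : IsNonnegKernel a b k₂) (hay : a ≤ y) (hyx : y ≤ x)
    (hxb : x ≤ b) :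
    IntervalIntegrable (fun z => k₁ x z * k₂ z y * ω z) volume y x ↔
      extDeltaK a b ω k₁ k₂ x y ≠ ⊤ := by
  rw [extDeltaK_eq_setLIntegral hω hk₁ hk₂ hay hxb,
    intervalIntegrable_iff_integrableOn_Ioc_of_le hyx, integrableOn_Ioc_iff_integrableOn_Ioo,
    ← lt_top_iff_ne_top,
    ← hasFiniteIntegral_iff_ofReal (deltaK_integrand_nonneg hω hk₁ hk₂ hay hxb)]
  exact and_iff_right (measurable_deltaK_integrand hω hk₁ hk₂).aestronglyMeasurable

theorem extDeltaK_eq_truncKernel_unitKernel (hω : IsIntegrableWeight a b ω)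
    (hk₁ : IsNonnegKernel a b k₁) (hk₂ : IsNonnegKernel a b k₂)
    (hδ : ∀ x y : ℝ, a ≤ y → y < x → x ≤ b → deltaK ω k₁ k₂ x y = 1) :
    extDeltaK a b ω k₁ k₂ = truncKernel a b unitKernel := by
  ext x y
  by_cases h : a ≤ y ∧ y < x ∧ x ≤ b
  · obtain ⟨hay, hyx, hxb⟩ := h
    rw [truncKernel_unitKernel_of_mem hay hyx hxb, ← ENNReal.toReal_eq_one_iff,
      ← deltaK_eq_toReal_extDeltaK hω hk₁ hk₂ hay hyx.le hxb, hδ x y hay hyx hxb]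
  · rw [extDeltaK_of_notMem h, truncKernel_of_notMem h]

theorem intervalIntegrable_mul_Ia_of_extDeltaK_le (hω : IsIntegrableWeight a b ω)
    (hk₁ : IsNonnegKernel a b k₁) (hk₂ : IsNonnegKernel a b k₂) (hx : x ∈ Icc a b)
    (hg : Integrable g (weightMeasure a b ω)) {R : ℝ≥0∞} (hR : R ≠ ⊤)
    (hle : ∀ y, extDeltaK a b ω k₁ k₂ x y ≤ R) :
    IntervalIntegrable (fun z => k₁ x z * Ia a ω k₂ g z * ω z) volume a x := by
  rw [intervalIntegrable_iff_integrable_truncKernel_smul hω hk₁ hx]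
  refine (integrable_toReal_smul_kernelOp hk₁.measurable_truncKernel.of_uncurry_left
    hk₂.measurable_truncKernel hg.1 (lintegral_mul_enorm_ne_top_of_le hR hle hg)).congr ?_
  exact (kernelOp_truncKernel_ae_eq hω hk₂).mono fun z hz =>
    congrArg ((truncKernel a b k₁ x z).toReal • ·) hz

theorem Ia_Ia_eq_kernelOp_of_extDeltaK_le (hω : IsIntegrableWeight a b ω)
    (hk₁ : IsNonnegKernel a b k₁) (hk₂ : IsNonnegKernel a b k₂) (hx : x ∈ Icc a b)
    (hg : Integrable g (weightMeasure a b ω)) {R : ℝ≥0∞} (hR : R ≠ ⊤)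
    (hle : ∀ y, extDeltaK a b ω k₁ k₂ x y ≤ R) :
    Ia a ω k₁ (Ia a ω k₂ g) x =
      kernelOp (weightMeasure a b ω) (extDeltaK a b ω k₁ k₂) g x := by
  rw [← kernelOp_truncKernel hω hk₁ hx, ← kernelOp_congr_ae (kernelOp_truncKernel_ae_eq hω hk₂)]
  exact kernelOp_kernelOp hk₁.measurable_truncKernel.of_uncurry_left hk₂.measurable_truncKernel
    hg.1 (lintegral_mul_enorm_ne_top_of_le hR hle hg)

end TruncatedKernel

section ConjugateKernels

open scoped ENNReal

variable {a b : ℝ} {ω f g : ℝ → ℝ} {k k' : ℝ → ℝ → ℝ} {x y : ℝ}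

theorem ae_hasDerivAt_integral_of_forall_intervalIntegrable {E : Type*} [NormedAddCommGroup E]
    [NormedSpace ℝ E] [CompleteSpace E] {h : ℝ → E}
    (hint : ∀ d ∈ Ioo a b, IntervalIntegrable h volume a d) :
    ∀ᵐ x ∂volume.restrict (Ioo a b), HasDerivAt (fun t => ∫ z in a..t, h z) (h x) x := by
  have hrat : ∀ᵐ x, ∀ q : ℚ, (q : ℝ) ∈ Ioo a b → x ∈ uIcc a (q : ℝ) →
      HasDerivAt (fun t => ∫ z in a..t, h z) (h x) x := by
    refine ae_all_iff.2 fun q => ?_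
    by_cases hq : (q : ℝ) ∈ Ioo a b
    · filter_upwards [(hint q hq).ae_hasDerivAt_integral] with x hx _ hxq
      exact hx hxq a left_mem_uIcc
    · exact ae_of_all _ fun _ hq' => absurd hq' hq
  refine (ae_restrict_iff' measurableSet_Ioo).2 ?_
  filter_upwards [hrat] with x hderiv hx
  obtain ⟨q, hxq, hqb⟩ := exists_rat_btwn hx.2
  exact hderiv q ⟨hx.1.trans hxq, hqb⟩ (Icc_subset_uIcc ⟨hx.1.le, hxq.le⟩)

theorem extDeltaK_unitKernel_le_left :
    extDeltaK a b ω k unitKernel x y ≤ extDeltaK a b ω k unitKernel x a := by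
  refine lintegral_mono fun z => ?_
  gcongr
  exact truncKernel_unitKernel_le_left

namespace Conjugate

theorem extDeltaK_left_right (hconj : Conjugate a b ω k k') (hω : IsIntegrableWeight a b ω)
    (hk : IsNonnegKernel a b k) (hk' : IsNonnegKernel a b k') :
    extDeltaK a b ω k k' = truncKernel a b unitKernel :=
  extDeltaK_eq_truncKernel_unitKernel hω hk hk' fun x y hay hyx hxb =>
    (hconj x y hay hyx hxb).1

theorem extDeltaK_right_left (hconj : Conjugate a b ω k k') (hω : IsIntegrableWeight a b ω)
    (hk : IsNonnegKernel a b k) (hk' : IsNonnegKernel a b k') :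
    extDeltaK a b ω k' k = truncKernel a b unitKernel :=
  extDeltaK_eq_truncKernel_unitKernel hω hk' hk fun x y hay hyx hxb =>
    (hconj x y hay hyx hxb).2

theorem extDeltaK_unitKernel_comm (hconj : Conjugate a b ω k k') (hω : IsIntegrableWeight a b ω)
    (hk : IsNonnegKernel a b k) (hk' : IsNonnegKernel a b k') :
    extDeltaK a b ω k unitKernel = extDeltaK a b ω unitKernel k := by
  calc extDeltaK a b ω k unitKernel
      = kernelComp (weightMeasure a b ω) (truncKernel a b k) (extDeltaK a b ω k' k) := by
        rw [hconj.extDeltaK_right_left hω hk hk', extDeltaK]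
    _ = kernelComp (weightMeasure a b ω) (extDeltaK a b ω k k') (truncKernel a b k) :=
        (kernelComp_assoc (fun _ => hk.measurable_truncKernel.of_uncurry_left)
          hk'.measurable_truncKernel fun _ => hk.measurable_truncKernel.of_uncurry_right).symm
    _ = extDeltaK a b ω unitKernel k := by
        rw [hconj.extDeltaK_left_right hω hk hk', extDeltaK]

theorem extDeltaK_unitKernel_mono (hconj : Conjugate a b ω k k') (hω : IsIntegrableWeight a b ω)
    (hk : IsNonnegKernel a b k) (hk' : IsNonnegKernel a b k') {x' : ℝ} (hx : x ≤ x')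
    (hx'b : x' ≤ b) :
    extDeltaK a b ω k unitKernel x y ≤ extDeltaK a b ω k unitKernel x' y := by
  rw [hconj.extDeltaK_unitKernel_comm hω hk hk']
  refine lintegral_mono fun z => ?_
  gcongr
  exact truncKernel_unitKernel_mono hx hx'b

theorem ae_mul_extDeltaK_unitKernel_lt_top (hconj : Conjugate a b ω k k')
    (hω : IsIntegrableWeight a b ω) (hk : IsNonnegKernel a b k) (hk' : IsNonnegKernel a b k')
    (x y : ℝ) :
    ∀ᵐ z ∂weightMeasure a b ω,
      truncKernel a b k' x z * extDeltaK a b ω k unitKernel z y < ⊤ := by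
  have := hω.isFiniteMeasure
  have hunit := (isNonnegKernel_unitKernel (a := a) (b := b)).measurable_truncKernel
  refine ae_lt_top (hk'.measurable_truncKernel.of_uncurry_left.mul
    (measurable_kernelComp_left hk.measurable_truncKernel hunit.of_uncurry_right)) ?_
  have hassoc :
      kernelComp (weightMeasure a b ω) (truncKernel a b k') (extDeltaK a b ω k unitKernel) =
        kernelComp (weightMeasure a b ω) (extDeltaK a b ω k' k) (truncKernel a b unitKernel) :=
    (kernelComp_assoc (fun _ => hk'.measurable_truncKernel.of_uncurry_left)
      hk.measurable_truncKernel fun _ => hunit.of_uncurry_right).symm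
  change kernelComp _ _ (extDeltaK a b ω k unitKernel) x y ≠ ⊤
  rw [hassoc, hconj.extDeltaK_right_left hω hk hk']
  refine ne_top_of_le_ne_top (measure_ne_top (weightMeasure a b ω) univ) ?_
  rw [← lintegral_one]
  exact lintegral_mono fun z =>
    mul_le_one' truncKernel_unitKernel_le_one truncKernel_unitKernel_le_one

-- If `k ⋆ 𝟙` were infinite at `(x, y)`, then also at `(z, y)` for all `z ∈ [x, b]`. Since
-- `k' ⋆ (k ⋆ 𝟙) = 𝟙 ⋆ 𝟙` is finite at `(b, y)`, this would force `k' b z = 0` for almost all such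
-- `z`, against `(k' ⋆ k)(b, x) = 1`.
theorem extDeltaK_unitKernel_ne_top (hconj : Conjugate a b ω k k') (hω : IsIntegrableWeight a b ω)
    (hk : IsNonnegKernel a b k) (hk' : IsNonnegKernel a b k') (hx : x ∈ Ico a b) :
    extDeltaK a b ω k unitKernel x y ≠ ⊤ := by
  intro htop
  have hzero : extDeltaK a b ω k' k b x = 0 := by
    refine (lintegral_congr_ae ?_).trans lintegral_zero
    filter_upwards [hconj.ae_mul_extDeltaK_unitKernel_lt_top hω hk hk' b y] with z hz
    by_cases hxzb : x < z ∧ z ≤ b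
    · have htop_z := top_unique (htop.ge.trans
        (hconj.extDeltaK_unitKernel_mono (y := y) hω hk hk' hxzb.1.le hxzb.2))
      rw [htop_z] at hz
      have hk'z : truncKernel a b k' b z = 0 := by
        by_contra hne
        exact hz.ne (ENNReal.mul_top hne)
      rw [hk'z, zero_mul]
    · rw [truncKernel_of_notMem (x := z) fun h => hxzb h.2, mul_zero]
  rw [hconj.extDeltaK_right_left hω hk hk', truncKernel_unitKernel_of_mem hx.1 hx.2 le_rfl] at hzero
  exact one_ne_zero hzero

theorem deltaK_unitKernel_comm (hconj : Conjugate a b ω k k') (hω : IsIntegrableWeight a b ω)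
    (hk : IsNonnegKernel a b k) (hk' : IsNonnegKernel a b k') (hay : a ≤ y) (hyx : y ≤ x)
    (hxb : x ≤ b) : deltaK ω k unitKernel x y = deltaK ω unitKernel k x y := by
  rw [deltaK_eq_toReal_extDeltaK hω hk isNonnegKernel_unitKernel hay hyx hxb,
    deltaK_eq_toReal_extDeltaK hω isNonnegKernel_unitKernel hk hay hyx hxb,
    hconj.extDeltaK_unitKernel_comm hω hk hk']

theorem Ia_Ia_eq_Ia_unitKernel (hconj : Conjugate a b ω k k') (hω : IsIntegrableWeight a b ω)
    (hk : IsNonnegKernel a b k) (hk' : IsNonnegKernel a b k') (hx : x ∈ Icc a b)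
    (hf : Integrable f (weightMeasure a b ω)) :
    Ia a ω k (Ia a ω k' f) x = Ia a ω unitKernel f x := by
  have hcomp := hconj.extDeltaK_left_right hω hk hk'
  rw [Ia_Ia_eq_kernelOp_of_extDeltaK_le hω hk hk' hx hf ENNReal.one_ne_top
    (fun y => by rw [hcomp]; exact truncKernel_unitKernel_le_one), hcomp,
    kernelOp_truncKernel hω isNonnegKernel_unitKernel hx]

theorem Ia_unitKernel_comm (hconj : Conjugate a b ω k k') (hω : IsIntegrableWeight a b ω)
    (hk : IsNonnegKernel a b k) (hk' : IsNonnegKernel a b k') (hx : x ∈ Ico a b)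
    (hg : Integrable g (weightMeasure a b ω)) :
    Ia a ω k (Ia a ω unitKernel g) x = Ia a ω unitKernel (Ia a ω k g) x := by
  have hfin := hconj.extDeltaK_unitKernel_ne_top (y := a) hω hk hk' hx
  have hle (y : ℝ) : extDeltaK a b ω k unitKernel x y ≤ extDeltaK a b ω k unitKernel x a :=
    extDeltaK_unitKernel_le_left
  have hcomm := hconj.extDeltaK_unitKernel_comm hω hk hk'
  rw [Ia_Ia_eq_kernelOp_of_extDeltaK_le hω hk isNonnegKernel_unitKernel
      (Ico_subset_Icc_self hx) hg hfin hle,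
    Ia_Ia_eq_kernelOp_of_extDeltaK_le hω isNonnegKernel_unitKernel hk
      (Ico_subset_Icc_self hx) hg hfin (fun y => hcomm ▸ hle y), hcomm]

theorem intervalIntegrable_mul_Ia_unitKernel (hconj : Conjugate a b ω k k')
    (hω : IsIntegrableWeight a b ω) (hk : IsNonnegKernel a b k) (hk' : IsNonnegKernel a b k')
    (hx : x ∈ Ico a b) (hg : Integrable g (weightMeasure a b ω)) :
    IntervalIntegrable (fun z => k x z * Ia a ω unitKernel g z * ω z) volume a x :=
  intervalIntegrable_mul_Ia_of_extDeltaK_le hω hk isNonnegKernel_unitKernel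
    (Ico_subset_Icc_self hx) hg (hconj.extDeltaK_unitKernel_ne_top hω hk hk' hx)
    fun _ => extDeltaK_unitKernel_le_left

theorem intervalIntegrable_Ia_mul (hconj : Conjugate a b ω k k')
    (hω : IsIntegrableWeight a b ω) (hk : IsNonnegKernel a b k) (hk' : IsNonnegKernel a b k')
    (hx : x ∈ Ico a b) (hg : Integrable g (weightMeasure a b ω)) :
    IntervalIntegrable (fun z => Ia a ω k g z * ω z) volume a x := by
  have hint := intervalIntegrable_mul_Ia_of_extDeltaK_le hω isNonnegKernel_unitKernel hk
    (Ico_subset_Icc_self hx) hg (hconj.extDeltaK_unitKernel_ne_top (y := a) hω hk hk' hx)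
    fun y => by
      rw [← hconj.extDeltaK_unitKernel_comm hω hk hk']
      exact extDeltaK_unitKernel_le_left
  simpa only [unitKernel, one_mul] using hint

theorem intervalIntegrable_mul_weight_left (hconj : Conjugate a b ω k k')
    (hω : IsIntegrableWeight a b ω) (hk : IsNonnegKernel a b k) (hk' : IsNonnegKernel a b k')
    (hx : x ∈ Ico a b) : IntervalIntegrable (fun z => k x z * ω z) volume a x := by
  have hint := (intervalIntegrable_deltaK_integrand_iff hω hk isNonnegKernel_unitKernel le_rfl
    hx.1 hx.2.le).2 (hconj.extDeltaK_unitKernel_ne_top hω hk hk' hx)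
  simpa only [unitKernel, mul_one] using hint

theorem intervalIntegrable_mul_weight_right (hconj : Conjugate a b ω k k')
    (hω : IsIntegrableWeight a b ω) (hk : IsNonnegKernel a b k) (hk' : IsNonnegKernel a b k')
    (hx : x ∈ Ico a b) : IntervalIntegrable (fun z => k z a * ω z) volume a x := by
  have hint := (intervalIntegrable_deltaK_integrand_iff hω isNonnegKernel_unitKernel hk le_rfl
    hx.1 hx.2.le).2 (hconj.extDeltaK_unitKernel_comm hω hk hk' ▸
      hconj.extDeltaK_unitKernel_ne_top hω hk hk' hx)
  simpa only [unitKernel, one_mul] using hint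

theorem Ia_unitKernel_eq_add (hconj : Conjugate a b ω k k') (hω : IsIntegrableWeight a b ω)
    (hk : IsNonnegKernel a b k) (hk' : IsNonnegKernel a b k')
    (hf : Integrable f (weightMeasure a b ω)) (hg : Integrable g (weightMeasure a b ω)) {c : ℝ}
    (hrep : Ia a ω k' f =ᵐ[volume.restrict (Icc a b)] fun x => c + Ia a ω unitKernel g x)
    (hx : x ∈ Ico a b) :
    Ia a ω unitKernel f x =
      c * deltaK ω k unitKernel x a + Ia a ω unitKernel (Ia a ω k g) x := by
  have hxab := Ico_subset_Icc_self hx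
  calc Ia a ω unitKernel f x
      = Ia a ω k (fun z => c + Ia a ω unitKernel g z) x := by
        rw [← hconj.Ia_Ia_eq_Ia_unitKernel hω hk hk' hxab hf, Ia_congr_ae hrep hxab]
    _ = ∫ z in a..x, (c * (k x z * ω z) + k x z * Ia a ω unitKernel g z * ω z) := by
        rw [Ia]
        congr with z
        ring
    _ = c * deltaK ω k unitKernel x a + Ia a ω k (Ia a ω unitKernel g) x := by
        rw [intervalIntegral.integral_add
          ((hconj.intervalIntegrable_mul_weight_left hω hk hk' hx).const_mul c)
          (hconj.intervalIntegrable_mul_Ia_unitKernel hω hk hk' hx hg),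
          intervalIntegral.integral_const_mul, deltaK_unitKernel_right]
        rfl
    _ = c * deltaK ω k unitKernel x a + Ia a ω unitKernel (Ia a ω k g) x := by
        rw [hconj.Ia_unitKernel_comm hω hk hk' hx hg]

theorem ae_hasDerivAt_deltaK_unitKernel (hconj : Conjugate a b ω k k')
    (hω : IsIntegrableWeight a b ω) (hk : IsNonnegKernel a b k) (hk' : IsNonnegKernel a b k') :
    ∀ᵐ x ∂volume.restrict (Ioo a b),
      HasDerivAt (fun t => deltaK ω k unitKernel t a) (k x a * ω x) x := by
  filter_upwards [ae_hasDerivAt_integral_of_forall_intervalIntegrable fun d hd =>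
    hconj.intervalIntegrable_mul_weight_right hω hk hk' (Ioo_subset_Ico_self hd),
    ae_restrict_mem measurableSet_Ioo] with x hderiv hx
  refine hderiv.congr_of_eventuallyEq ?_
  filter_upwards [Ioo_mem_nhds hx.1 hx.2] with t ht
  rw [hconj.deltaK_unitKernel_comm hω hk hk' le_rfl ht.1.le ht.2.le, deltaK_unitKernel_left]

theorem ae_eq_add_Ia (hconj : Conjugate a b ω k k') (hω : IsIntegrableWeight a b ω)
    (hk : IsNonnegKernel a b k) (hk' : IsNonnegKernel a b k')
    (hf : Integrable f (weightMeasure a b ω)) (hg : Integrable g (weightMeasure a b ω)) {c : ℝ}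
    (hrep : Ia a ω k' f =ᵐ[volume.restrict (Icc a b)] fun x => c + Ia a ω unitKernel g x) :
    ∀ᵐ x ∂volume.restrict (Ioo a b), f x = c * k x a + Ia a ω k g x := by
  have hfω (d : ℝ) (hd : d ∈ Ioo a b) : IntervalIntegrable (fun z => f z * ω z) volume a d :=
    (intervalIntegrable_iff_integrableOn_Icc_of_le hd.1.le).2 <|
      (hω.integrable_weightMeasure_iff.1 hf).mono_set (Icc_subset_Icc_right hd.2.le)
  filter_upwards [ae_hasDerivAt_integral_of_forall_intervalIntegrable hfω,
    hconj.ae_hasDerivAt_deltaK_unitKernel hω hk hk',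
    ae_hasDerivAt_integral_of_forall_intervalIntegrable fun d hd =>
      hconj.intervalIntegrable_Ia_mul hω hk hk' (Ioo_subset_Ico_self hd) hg,
    ae_restrict_mem measurableSet_Ioo] with x hderiv_f hderiv_Δ hderiv_g hx
  have hderiv_f' := ((hderiv_Δ.const_mul c).add hderiv_g).congr_of_eventuallyEq
    (f₁ := fun t => ∫ z in a..t, f z * ω z) <| by
      filter_upwards [Ioo_mem_nhds hx.1 hx.2] with t ht
      simpa only [Ia_unitKernel, Pi.add_apply] using
        hconj.Ia_unitKernel_eq_add hω hk hk' hf hg hrep (Ioo_subset_Ico_self ht)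
  refine mul_right_cancel₀ (hω.pos x (Ioo_subset_Icc_self hx)).ne' ?_
  rw [hderiv_f.unique hderiv_f']
  ring

end Conjugate
end ConjugateKernels

theorem stmt11_general {a b : ℝ} {ω : ℝ → ℝ} (hω : IsIntegrableWeight a b ω)
    {k k' : ℝ → ℝ → ℝ} (hk : IsNonnegKernel a b k) (hk' : IsNonnegKernel a b k')
    (hconj : Conjugate a b ω k k') {f μ : ℝ → ℝ}
    (hf : IntegrableOn (fun x => f x * ω x) (Icc a b)) (hμ : IntegrableOn μ (Icc a b)) {c : ℝ}
    (hrep : ∀ᵐ x ∂(volume.restrict (Icc a b)), Ia a ω k' f x = c + ∫ t in a..x, μ t) :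
    ∀ᵐ x ∂(volume.restrict (Icc a b)),
      DifferentiableAt ℝ (fun t => ∫ z in a..t, k t z * ω z) x ∧
      Ia a ω k (fun y => (ω y)⁻¹ * μ y) x =
        f x - c * ((ω x)⁻¹ * deriv (fun t => ∫ z in a..t, k t z * ω z) x) := by
  have hrep' : Ia a ω k' f =ᵐ[volume.restrict (Icc a b)]
      fun x => c + Ia a ω unitKernel (fun y => (ω y)⁻¹ * μ y) x := by
    filter_upwards [hrep, ae_restrict_mem measurableSet_Icc] with x hx hxab
    rw [hx, Ia_unitKernel_inv_mul hω hxab]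
  rw [← restrict_Ioo_eq_restrict_Icc]
  filter_upwards [hconj.ae_hasDerivAt_deltaK_unitKernel hω hk hk',
    hconj.ae_eq_add_Ia hω hk hk' (hω.integrable_weightMeasure_iff.2 hf) (hω.integrable_inv_mul hμ)
      hrep', ae_restrict_mem measurableSet_Ioo] with x hΔ hfx hx
  simp only [deltaK_unitKernel_right] at hΔ
  refine ⟨hΔ.differentiableAt, ?_⟩
  have hωx := (hω.pos x (Ioo_subset_Icc_self hx)).ne'
  rw [hΔ.deriv, hfx]
  field_simp
  ring

/-- if `k` and `k'` are conjugate and `I_a^{k'} f` has the absolutely continuous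
representative `x ↦ c + ∫_a^x μ(t) dt` (so `D_a^{k'} f = ω⁻¹ μ` and `(I_a^{k'} f)(a) = c`),
then, with `Δ(x) = δ_{k,𝟙}(x,a) = ∫_a^x k(x,z) ω(z) dz`, for a.e. `x ∈ [a,b]` the map `Δ` is
differentiable at `x` and `I_a^k (D_a^{k'} f)(x) = f(x) − c (1/ω(x)) Δ'(x)`. -/
theorem stmt11 (a b : ℝ) (hab : a < b) (ω : ℝ → ℝ) (hω : IsWeight a b ω)
    (k k' : ℝ → ℝ → ℝ) (hk : MemK a b ω k) (hk' : MemK a b ω k')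
    (hconj : Conjugate a b ω k k')
    (f μ : ℝ → ℝ) (hf : IntegrableOn f (Icc a b)) (hμ : IntegrableOn μ (Icc a b))
    (c : ℝ)
    (hrep : ∀ᵐ x ∂(volume.restrict (Icc a b)),
      Ia a ω k' f x = c + ∫ t in a..x, μ t) :
    ∀ᵐ x ∂(volume.restrict (Icc a b)),
      DifferentiableAt ℝ (fun t => ∫ z in a..t, k t z * ω z) x ∧
      Ia a ω k (fun y => (ω y)⁻¹ * μ y) x =
        f x - c * ((ω x)⁻¹ * deriv (fun t => ∫ z in a..t, k t z * ω z) x) := by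
  exact stmt11_general hω.isIntegrableWeight hk.isNonnegKernel hk'.isNonnegKernel hconj
    (hω.integrableOn_mul hf) hμ hrep

end
end

section
/- Let α > 0 and f ∈ L¹([0,1];ℝ). Then H_0^α(S_0^α f)(x) = S_0^α(H_0^α f)(x) = ∫_0^x f(y) dy for a.e. x ∈ [0,1], and H_1^α(S_1^α f)(x) = S_1^α(H_1^α f)(x) = ∫_x^1 f(y) dy for a.e. x ∈ [0,1]. -/
open MeasureTheory Set

noncomputable section

/-- the exponential integral function `E₁(x) = ∫_x^∞ e^{−t}/t dt`. -/
def E1 (x : ℝ) : ℝ := ∫ t in Ioi x, Real.exp (-t) / t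

/-- `F(t) = (∫_0^∞ t^{s−1}/Γ(s) ds) e^{−t}`. -/
def Ffun (t : ℝ) : ℝ := (∫ s in Ioi (0:ℝ), t ^ (s - 1) / Real.Gamma s) * Real.exp (-t)

/-- left-sided fractional integral of type (I): `(H_0^α f)(x) = ∫_0^x F((x−y)/α) f(y) dy`. -/
def H0 (α : ℝ) (f : ℝ → ℝ) (x : ℝ) : ℝ := ∫ y in (0:ℝ)..x, Ffun ((x - y) / α) * f y

/-- right-sided fractional integral of type (I): `(H_1^α f)(x) = ∫_x^1 F((y−x)/α) f(y) dy`. -/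
def H1 (α : ℝ) (f : ℝ → ℝ) (x : ℝ) : ℝ := ∫ y in x..(1:ℝ), Ffun ((y - x) / α) * f y

/-- left-sided fractional integral of type (II):
`(S_0^α f)(x) = (1/α) ∫_0^x E₁((x−y)/α) f(y) dy`. -/
def S0 (α : ℝ) (f : ℝ → ℝ) (x : ℝ) : ℝ := (1 / α) * ∫ y in (0:ℝ)..x, E1 ((x - y) / α) * f y

/-- right-sided fractional integral of type (II):
`(S_1^α f)(x) = (1/α) ∫_x^1 E₁((y−x)/α) f(y) dy`. -/
def S1 (α : ℝ) (f : ℝ → ℝ) (x : ℝ) : ℝ := (1 / α) * ∫ y in x..(1:ℝ), E1 ((y - x) / α) * f y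

/-!
The kernels `F` and `E₁` have Laplace transforms `1 / log (1 + p)` and `log (1 + p) / p`, whose
product `1 / p` is the transform of the constant `1`. An integrable function whose Laplace
transform vanishes at `0, 1, 2, …` is zero almost everywhere, because after the substitution
`x = exp (-t)` all its moments vanish and Weierstrass approximation applies. Hence the one-sided
convolution of `F` and `E₁` is `1`, and associativity of that convolution turns the composition of
the left-sided operators into integration from `0`. The right-sided operators are the conjugates
of the left-sided ones under `y ↦ 1 - y`.
-/

section

open Real Filter Topology

section ExpMoments

variable {E : Type*} [NormedAddCommGroup E] [NormedSpace ℝ E] {h : ℝ → E}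

lemma exp_neg_mem_Icc {t : ℝ} (ht : 0 ≤ t) : exp (-t) ∈ Icc (0 : ℝ) 1 :=
  ⟨(exp_pos _).le, exp_le_one_iff.2 (neg_nonpos.2 ht)⟩

lemma integrableOn_comp_exp_neg_smul (hh : IntegrableOn h (Ioi 0)) {φ : ℝ → ℝ}
    (hφ : Continuous φ) : IntegrableOn (fun t => φ (exp (-t)) • h t) (Ioi 0) := by
  obtain ⟨C, hC⟩ := isCompact_Icc.exists_bound_of_continuousOn hφ.continuousOn
  refine hh.bdd_smul C (by fun_prop) ?_
  filter_upwards [ae_restrict_mem measurableSet_Ioi] with t ht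
  exact hC _ (exp_neg_mem_Icc (le_of_lt ht))

lemma integral_polynomial_eval_exp_neg_smul_eq_zero (hh : IntegrableOn h (Ioi 0))
    (hmoments : ∀ n : ℕ, ∫ t in Ioi 0, exp (-t) ^ n • h t = 0) (P : Polynomial ℝ) :
    ∫ t in Ioi 0, P.eval (exp (-t)) • h t = 0 := by
  simp_rw [Polynomial.eval_eq_sum_range, Finset.sum_smul, mul_smul]
  rw [integral_finsetSum]
  · simp_rw [integral_smul, hmoments, smul_zero, Finset.sum_const_zero]
  · exact fun n _ => (integrableOn_comp_exp_neg_smul hh (continuous_pow n)).fun_smul _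

lemma integral_comp_exp_neg_smul_eq_zero (hh : IntegrableOn h (Ioi 0))
    (hmoments : ∀ n : ℕ, ∫ t in Ioi 0, exp (-t) ^ n • h t = 0) {φ : ℝ → ℝ}
    (hφ : Continuous φ) : ∫ t in Ioi 0, φ (exp (-t)) • h t = 0 := by
  set C := ∫ t in Ioi 0, ‖h t‖
  have hC : 0 ≤ C := by positivity
  refine norm_le_zero_iff.1 (le_of_forall_pos_le_add fun ε hε => ?_)
  obtain ⟨P, hP⟩ := exists_polynomial_near_of_continuousOn 0 1 φ hφ.continuousOn (ε / (C + 1))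
    (by positivity)
  calc ‖∫ t in Ioi 0, φ (exp (-t)) • h t‖
      = ‖∫ t in Ioi 0, (P.eval (exp (-t)) - φ (exp (-t))) • h t‖ := by
        simp_rw [sub_smul]
        rw [integral_sub (integrableOn_comp_exp_neg_smul hh P.continuous)
          (integrableOn_comp_exp_neg_smul hh hφ),
          integral_polynomial_eval_exp_neg_smul_eq_zero hh hmoments, zero_sub, norm_neg]
    _ ≤ ∫ t in Ioi 0, ε / (C + 1) * ‖h t‖ := by
        refine norm_integral_le_of_norm_le (hh.norm.const_mul _) ?_
        filter_upwards [ae_restrict_mem measurableSet_Ioi] with t ht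
        rw [norm_smul]
        gcongr
        exact (hP _ (exp_neg_mem_Icc (le_of_lt ht))).le
    _ = ε * (C / (C + 1)) := by rw [integral_const_mul]; ring
    _ ≤ 0 + ε := by
        rw [zero_add]
        exact mul_le_of_le_one_right hε.le (div_le_one_of_le₀ (by linarith) (by linarith))

lemma continuous_comp_neg_log_of_hasCompactSupport {g : ℝ → ℝ} (hg : Continuous g)
    (hsupp : HasCompactSupport g) (hzero : g 0 = 0) : Continuous fun x => g (-log x) := by
  refine continuous_iff_continuousAt.2 fun x => ?_
  rcases eq_or_ne x 0 with rfl | hx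
  · obtain ⟨R, hR⟩ := hsupp.isCompact.isBounded.subset_closedBall 0
    have hlarge : ∀ᶠ x in 𝓝[≠] (0 : ℝ), g (-log x) = 0 := by
      filter_upwards [tendsto_log_nhdsNE_zero.eventually_lt_atBot (-R)] with x hx
      refine image_eq_zero_of_notMem_tsupport fun hmem => ?_
      have := (le_abs_self _).trans (mem_closedBall_zero_iff.1 (hR hmem))
      linarith
    rw [continuousAt_iff_punctured_nhds, log_zero, neg_zero, hzero]
    exact tendsto_const_nhds.congr' (hlarge.mono fun _ h => h.symm)
  · exact hg.continuousAt.comp (continuousAt_log hx).neg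

theorem ae_eq_zero_of_integral_exp_neg_pow_smul_eq_zero [CompleteSpace E]
    (hh : IntegrableOn h (Ioi 0))
    (hmoments : ∀ n : ℕ, ∫ t in Ioi 0, exp (-t) ^ n • h t = 0) :
    ∀ᵐ t ∂volume.restrict (Ioi 0), h t = 0 := by
  rw [ae_restrict_iff' measurableSet_Ioi]
  refine isOpen_Ioi.ae_eq_zero_of_integral_contDiff_smul_eq_zero hh.locallyIntegrableOn
    fun g hg hsupp hsub => ?_
  -- A test function supported in `(0, ∞)` is a continuous function of `exp (-t)`.
  have hvanish : ∀ t ∉ Ioi (0 : ℝ), g t = 0 := fun t ht =>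
    image_eq_zero_of_notMem_tsupport fun hmem => ht (hsub hmem)
  have hlog := integral_comp_exp_neg_smul_eq_zero hh hmoments
    (continuous_comp_neg_log_of_hasCompactSupport hg.continuous hsupp (hvanish 0 self_notMem_Ioi))
  simp_rw [log_exp, neg_neg] at hlog
  rwa [setIntegral_eq_integral_of_forall_compl_eq_zero
    fun t ht => by rw [hvanish t ht, zero_smul]] at hlog

end ExpMoments

section Volterra

/-- The one-sided (Volterra) convolution `∫_0^x k(x - y) f(y) dy`. Both left-sided fractional
integrals are of this form; only the values of `k` and `f` on `(0, x)` matter. -/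
def volterra (k f : ℝ → ℝ) (x : ℝ) : ℝ := ∫ y in (0 : ℝ)..x, k (x - y) * f y

variable {k l f g : ℝ → ℝ} {x : ℝ}

lemma volterra_comm (k f : ℝ → ℝ) : volterra k f = volterra f k := by
  ext x
  simpa [volterra, mul_comm] using
    (intervalIntegral.integral_comp_sub_left (a := 0) (b := x) (fun y => f (x - y) * k y) x)

lemma volterra_const_mul_left (c : ℝ) (k f : ℝ → ℝ) :
    volterra (fun t => c * k t) f x = c * volterra k f x := by
  simp only [volterra, mul_assoc, intervalIntegral.integral_const_mul]

lemma volterra_one_left (f : ℝ → ℝ) (x : ℝ) : volterra 1 f x = ∫ y in (0 : ℝ)..x, f y := by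
  simp [volterra]

lemma volterra_congr_right (hx : 0 ≤ x) (hfg : ∀ᵐ y, y ∈ Ioo 0 x → f y = g y) :
    volterra k f x = volterra k g x := by
  simp only [volterra, intervalIntegral.integral_of_le hx, integral_Ioc_eq_integral_Ioo]
  exact setIntegral_congr_ae measurableSet_Ioo
    (hfg.mono fun y hy hmem => by simp only [hy hmem])

lemma exp_neg_mul_mul_volterra (p : ℝ) (k f : ℝ → ℝ) (x : ℝ) :
    exp (-(p * x)) * volterra k f x =
      volterra (fun t => exp (-(p * t)) * k t) (fun t => exp (-(p * t)) * f t) x := by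
  simp only [volterra, ← intervalIntegral.integral_const_mul]
  congr 1 with y
  rw [show -(p * x) = -(p * (x - y)) + -(p * y) by ring, exp_add]
  ring

open ContinuousLinearMap in
lemma convolution_indicator_Ioi (k f : ℝ → ℝ) :
    convolution ((Ioi 0).indicator k) ((Ioi 0).indicator f) (mul ℝ ℝ) volume =
      (Ioi 0).indicator (volterra k f) := by
  rw [← posConvolution_eq_convolution_indicator k f (mul ℝ ℝ) volume, volterra_comm]
  refine congrArg _ (funext fun x => ?_)
  simp only [volterra, mul_apply', mul_comm]

lemma integrableOn_volterra (hk : IntegrableOn k (Ioi 0)) (hf : IntegrableOn f (Ioi 0)) :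
    IntegrableOn (volterra k f) (Ioi 0) := by
  rw [← integrable_indicator_iff measurableSet_Ioi] at hk hf ⊢
  rw [← convolution_indicator_Ioi]
  exact hk.integrable_convolution _ hf

lemma integral_volterra (hk : IntegrableOn k (Ioi 0)) (hf : IntegrableOn f (Ioi 0)) :
    ∫ x in Ioi 0, volterra k f x = (∫ t in Ioi 0, k t) * ∫ t in Ioi 0, f t := by
  rw [volterra_comm, mul_comm]
  simpa [volterra, mul_comm] using
    integral_posConvolution hk hf (ContinuousLinearMap.mul ℝ ℝ)

open ContinuousLinearMap in
lemma volterra_assoc_ae_of_integrableOn (hk : IntegrableOn k (Ioi 0))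
    (hl : IntegrableOn l (Ioi 0)) (hf : IntegrableOn f (Ioi 0)) :
    ∀ᵐ x ∂volume.restrict (Ioi 0),
      volterra (volterra k l) f x = volterra k (volterra l f) x := by
  rw [ae_restrict_iff' measurableSet_Ioi]
  rw [← integrable_indicator_iff measurableSet_Ioi] at hk hl hf
  filter_upwards [hk.norm.ae_convolution_exists (mul ℝ ℝ)
    (hl.norm.integrable_convolution (mul ℝ ℝ) hf.norm)] with x hexists hx
  have hassoc := convolution_assoc (mul ℝ ℝ) (mul ℝ ℝ) (mul ℝ ℝ) (mul ℝ ℝ)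
    (fun a b c => mul_assoc a b c) hk.aestronglyMeasurable hl.aestronglyMeasurable
    hf.aestronglyMeasurable (hk.ae_convolution_exists (mul ℝ ℝ) hl)
    (hl.norm.ae_convolution_exists (mul ℝ ℝ) hf.norm) hexists
  simpa only [convolution_indicator_Ioi, indicator_of_mem hx] using hassoc

end Volterra

section Laplace

variable {k l f : ℝ → ℝ} {p L M : ℝ}

/-- Absolute convergence at `p` of the Laplace integral of `k`. -/
def LaplaceIntegrable (k : ℝ → ℝ) (p : ℝ) : Prop :=
  IntegrableOn (fun t => exp (-(p * t)) * k t) (Ioi 0)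

/-- The Laplace integral `∫_0^∞ e^{-pt} k(t) dt` converges absolutely, with value `L`. Stating
convergence and value together avoids the junk value `0` of a divergent integral. -/
structure HasLaplace (k : ℝ → ℝ) (p L : ℝ) : Prop where
  laplaceIntegrable : LaplaceIntegrable k p
  integral_eq : ∫ t in Ioi 0, exp (-(p * t)) * k t = L

lemma hasLaplace_one (hp : 0 < p) : HasLaplace 1 p (1 / p) where
  laplaceIntegrable := by
    simpa [LaplaceIntegrable] using integrableOn_exp_mul_Ioi (neg_lt_zero.2 hp) 0
  integral_eq := by simpa using integral_exp_mul_Ioi (neg_lt_zero.2 hp) 0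

lemma HasLaplace.congr (hk : HasLaplace k p L) (hkl : EqOn k l (Ioi 0)) : HasLaplace l p L := by
  have hexp : EqOn (fun t => exp (-(p * t)) * k t) (fun t => exp (-(p * t)) * l t) (Ioi 0) :=
    fun t ht => by simp only [hkl ht]
  exact ⟨hk.laplaceIntegrable.congr_fun hexp measurableSet_Ioi,
    (setIntegral_congr_fun measurableSet_Ioi hexp).symm.trans hk.integral_eq⟩

lemma HasLaplace.volterra (hk : HasLaplace k p L) (hf : HasLaplace f p M) :
    HasLaplace (volterra k f) p (L * M) where
  laplaceIntegrable := by
    simpa only [LaplaceIntegrable, exp_neg_mul_mul_volterra] using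
      integrableOn_volterra hk.laplaceIntegrable hf.laplaceIntegrable
  integral_eq := by
    simp only [exp_neg_mul_mul_volterra]
    rw [integral_volterra hk.laplaceIntegrable hf.laplaceIntegrable, hk.integral_eq,
      hf.integral_eq]

lemma HasLaplace.const_mul (hk : HasLaplace k p L) (c : ℝ) :
    HasLaplace (fun t => c * k t) p (c * L) where
  laplaceIntegrable := by
    simpa only [LaplaceIntegrable, IntegrableOn, mul_left_comm c] using
      Integrable.const_mul hk.laplaceIntegrable c
  integral_eq := by simp only [mul_left_comm _ c, integral_const_mul, hk.integral_eq]

lemma HasLaplace.comp_div {α : ℝ} (hα : 0 < α) (hk : HasLaplace k (α * p) L) :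
    HasLaplace (fun t => k (t / α)) p (α * L) := by
  have hrescale (t : ℝ) :
      exp (-(p * t)) * k (t / α) = exp (-(α * p * (α⁻¹ * t))) * k (α⁻¹ * t) := by
    rw [div_eq_inv_mul]
    congr 2
    field_simp
  constructor
  · simp only [LaplaceIntegrable, hrescale]
    refine (integrableOn_Ioi_comp_mul_left_iff
      (fun t => exp (-(α * p * t)) * k t) 0 (inv_pos.2 hα)).2 ?_
    rw [mul_zero]
    exact hk.laplaceIntegrable
  · simp only [hrescale]
    rw [integral_comp_mul_left_Ioi (fun t => exp (-(α * p * t)) * k t) 0 (inv_pos.2 hα), mul_zero,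
      hk.integral_eq, inv_inv, smul_eq_mul]

lemma hasLaplace_exp_neg_mul {w : ℝ} (hpw : 0 < p + w) :
    HasLaplace (fun t => exp (-(w * t))) p (1 / (p + w)) := by
  have hmerge (t : ℝ) : exp (-(p * t)) * exp (-(w * t)) = exp (-((p + w) * t)) * (1 : ℝ → ℝ) t := by
    rw [← exp_add, Pi.one_apply]
    ring_nf
  have hone := hasLaplace_one hpw
  constructor
  · simpa only [LaplaceIntegrable, hmerge] using hone.laplaceIntegrable
  · simpa only [hmerge] using hone.integral_eq

lemma hasLaplace_integral_of_nonneg {Y : Type*} [MeasurableSpace Y] {ν : Measure Y} [SFinite ν]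
    {K : ℝ → Y → ℝ} {L : Y → ℝ}
    (hmeas : AEStronglyMeasurable (Function.uncurry K) ((volume.restrict (Ioi 0)).prod ν))
    (hnonneg : ∀ᵐ y ∂ν, ∀ t > 0, 0 ≤ K t y) (hK : ∀ᵐ y ∂ν, HasLaplace (K · y) p (L y))
    (hL : Integrable L ν) : HasLaplace (fun t => ∫ y, K t y ∂ν) p (∫ y, L y ∂ν) := by
  have hexp : Measurable fun z : ℝ × Y => exp (-(p * z.1)) := by fun_prop
  have hint : Integrable (Function.uncurry fun t y => exp (-(p * t)) * K t y)
      ((volume.restrict (Ioi 0)).prod ν) := by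
    refine (integrable_prod_iff' (hexp.aestronglyMeasurable.mul hmeas)).2
      ⟨hK.mono fun _ hy => hy.laplaceIntegrable, hL.congr ?_⟩
    filter_upwards [hnonneg, hK] with y hy hKy
    rw [← hKy.integral_eq]
    refine setIntegral_congr_fun measurableSet_Ioi fun t ht => ?_
    exact (norm_of_nonneg (mul_nonneg (exp_pos _).le (hy t ht))).symm
  constructor
  · simpa only [LaplaceIntegrable, IntegrableOn, Function.uncurry_apply_pair,
      integral_const_mul] using hint.integral_prod_left
  · simp only [← integral_const_mul]
    rw [integral_integral_swap hint]
    exact integral_congr_ae (hK.mono fun _ hy => hy.integral_eq)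

theorem ae_eq_of_hasLaplace {L : ℝ → ℝ} (hk : ∀ q ≥ p, HasLaplace k q (L q))
    (hl : ∀ q ≥ p, HasLaplace l q (L q)) : ∀ᵐ t ∂volume.restrict (Ioi 0), k t = l t := by
  have hp_le (n : ℕ) : p ≤ p + n := by simp
  have htilt (n : ℕ) (t u v : ℝ) :
      exp (-t) ^ n • (exp (-(p * t)) * u - exp (-(p * t)) * v) =
        exp (-((p + n) * t)) * u - exp (-((p + n) * t)) * v := by
    rw [add_mul, neg_add, exp_add, ← mul_neg (n : ℝ), exp_nat_mul, smul_eq_mul]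
    ring
  have hmoments (n : ℕ) :
      ∫ t in Ioi 0, exp (-t) ^ n • (exp (-(p * t)) * k t - exp (-(p * t)) * l t) = 0 := by
    simp only [htilt]
    rw [integral_sub (hk _ (hp_le n)).laplaceIntegrable (hl _ (hp_le n)).laplaceIntegrable,
      (hk _ (hp_le n)).integral_eq, (hl _ (hp_le n)).integral_eq, sub_self]
  filter_upwards [ae_eq_zero_of_integral_exp_neg_pow_smul_eq_zero
    (Integrable.sub (hk p le_rfl).laplaceIntegrable (hl p le_rfl).laplaceIntegrable) hmoments]
    with t ht
  exact mul_left_cancel₀ (exp_ne_zero _) (sub_eq_zero.1 ht)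

lemma volterra_assoc_ae (hk : LaplaceIntegrable k p) (hl : LaplaceIntegrable l p)
    (hf : LaplaceIntegrable f p) :
    ∀ᵐ x ∂volume.restrict (Ioi 0),
      volterra (volterra k l) f x = volterra k (volterra l f) x := by
  filter_upwards [volterra_assoc_ae_of_integrableOn hk hl hf] with x hx
  refine mul_left_cancel₀ (exp_ne_zero (-(p * x))) ?_
  simpa only [exp_neg_mul_mul_volterra] using hx

lemma laplaceIntegrable_indicator_Icc {T : ℝ} (hf : IntegrableOn f (Icc 0 T)) (p : ℝ) :
    LaplaceIntegrable ((Icc 0 T).indicator f) p := by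
  have hexp : Continuous fun t => exp (-(p * t)) := by fun_prop
  have hmul := hf.continuousOn_mul hexp.continuousOn isCompact_Icc
  exact (((integrable_indicator_iff measurableSet_Icc).2 hmul).congr
    (ae_of_all _ fun _ => indicator_mul_right _ _ _)).integrableOn

lemma volterra_volterra_ae_eq_integral {T : ℝ} (hk : LaplaceIntegrable k p)
    (hl : LaplaceIntegrable l p) (hkl : ∀ᵐ t ∂volume.restrict (Ioi 0), volterra k l t = 1)
    (hf : IntegrableOn f (Icc 0 T)) :
    ∀ᵐ x ∂volume.restrict (Icc 0 T), volterra k (volterra l f) x = ∫ y in (0 : ℝ)..x, f y := by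
  rw [← Measure.restrict_congr_set Ioo_ae_eq_Icc, ae_restrict_iff' measurableSet_Ioo]
  rw [ae_restrict_iff' measurableSet_Ioi] at hkl
  set fT := (Icc 0 T).indicator f
  have hassoc := volterra_assoc_ae hk hl (laplaceIntegrable_indicator_Icc hf p)
  rw [ae_restrict_iff' measurableSet_Ioi] at hassoc
  filter_upwards [hassoc] with x hx ⟨hx0, hxT⟩
  have htrunc {y : ℝ} (hy : y ∈ Ioc 0 x) (m : ℝ → ℝ) : volterra m f y = volterra m fT y :=
    volterra_congr_right hy.1.le <| ae_of_all _ fun z hz =>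
      (indicator_of_mem (show z ∈ Icc 0 T from ⟨hz.1.le, by linarith [hz.2, hy.2]⟩) f).symm
  calc volterra k (volterra l f) x
      = volterra k (volterra l fT) x := volterra_congr_right hx0.le <|
        ae_of_all _ fun y hy => htrunc (Ioo_subset_Ioc_self hy) l
    _ = volterra fT (volterra k l) x := by rw [← hx hx0, volterra_comm]
    _ = volterra fT 1 x := volterra_congr_right hx0.le (hkl.mono fun t ht hmem => ht hmem.1)
    _ = ∫ y in (0 : ℝ)..x, f y := by
        rw [volterra_comm, ← htrunc ⟨hx0, le_rfl⟩, volterra_one_left]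

end Laplace

section Kernels

variable {p α : ℝ}

lemma E1_eq_integral_inv_mul_exp_neg_mul {t : ℝ} (ht : 0 < t) :
    E1 t = ∫ w in Ioi 1, w⁻¹ * exp (-(w * t)) := by
  have h := integral_comp_mul_left_Ioi (fun v => exp (-v) / v) 1 ht
  rw [mul_one, smul_eq_mul, eq_inv_mul_iff_mul_eq₀ ht.ne', ← integral_const_mul] at h
  rw [E1, ← h]
  congr 1 with w
  rw [mul_comm w t]
  field_simp

lemma hasDerivAt_log_div_add_div {w : ℝ} (hp : 0 < p) (hw : 0 < w) :
    HasDerivAt (fun w => log (w / (p + w)) / p) (w⁻¹ * (1 / (p + w))) w := by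
  have hadd : p + w ≠ 0 := by positivity
  have h := (((hasDerivAt_id' w).div ((hasDerivAt_id' w).const_add p) hadd).log
    (div_ne_zero hw.ne' hadd)).div_const p
  refine h.congr_deriv ?_
  simp only [Pi.div_apply]
  field_simp
  ring

lemma tendsto_log_div_add_div_atTop (p : ℝ) :
    Tendsto (fun w => log (w / (p + w)) / p) atTop (𝓝 0) := by
  have hratio : Tendsto (fun w : ℝ => 1 - p / (p + w)) atTop (𝓝 (1 - 0)) :=
    tendsto_const_nhds.sub
      (tendsto_const_nhds.div_atTop (tendsto_atTop_add_const_left _ p tendsto_id))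
  have hlog := (hratio.log (by norm_num)).div_const p
  rw [sub_zero, log_one, zero_div] at hlog
  refine hlog.congr' ?_
  filter_upwards [eventually_gt_atTop (-p)] with w hw
  have : p + w ≠ 0 := by linarith
  congr 2
  field_simp
  ring

lemma integrableOn_inv_mul_one_div_add (hp : 0 < p) :
    IntegrableOn (fun w => w⁻¹ * (1 / (p + w))) (Ioi 1) :=
  integrableOn_Ioi_deriv_of_nonneg'
    (fun _ hw => hasDerivAt_log_div_add_div hp (one_pos.trans_le hw))
    (fun w hw => by have : 0 < w := one_pos.trans hw; positivity)
    (tendsto_log_div_add_div_atTop p)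

lemma integral_inv_mul_one_div_add (hp : 0 < p) :
    ∫ w in Ioi 1, w⁻¹ * (1 / (p + w)) = log (1 + p) / p := by
  rw [integral_Ioi_of_hasDerivAt_of_tendsto'
    (fun _ hw => hasDerivAt_log_div_add_div hp (one_pos.trans_le hw))
    (integrableOn_inv_mul_one_div_add hp) (tendsto_log_div_add_div_atTop p), one_div, log_inv,
    add_comm p]
  ring

theorem hasLaplace_E1 (hp : 0 < p) : HasLaplace E1 p (log (1 + p) / p) := by
  have hpos : ∀ᵐ w ∂volume.restrict (Ioi (1 : ℝ)), 0 < w :=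
    (ae_restrict_mem measurableSet_Ioi).mono fun w hw => one_pos.trans hw
  have hmeas : Measurable (Function.uncurry fun t w : ℝ => w⁻¹ * exp (-(w * t))) := by
    unfold Function.uncurry
    fun_prop
  rw [← integral_inv_mul_one_div_add hp]
  exact (hasLaplace_integral_of_nonneg hmeas.aestronglyMeasurable
    (hpos.mono fun w hw t _ => by positivity)
    (hpos.mono fun w hw => (hasLaplace_exp_neg_mul (add_pos hp hw)).const_mul w⁻¹)
    (integrableOn_inv_mul_one_div_add hp)).congr
    fun t ht => (E1_eq_integral_inv_mul_exp_neg_mul ht).symm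

lemma hasLaplace_rpow_div_Gamma_mul_exp_neg {s : ℝ} (hs : 0 < s) (hp : 0 < 1 + p) :
    HasLaplace (fun t => t ^ (s - 1) / Gamma s * exp (-t)) p (exp (-log (1 + p) * s)) := by
  have hmerge (t : ℝ) : exp (-(p * t)) * (t ^ (s - 1) / Gamma s * exp (-t)) =
      t ^ (s - 1) * exp (-((1 + p) * t)) / Gamma s := by
    rw [show -((1 + p) * t) = -(p * t) + -t by ring, exp_add]
    ring
  have hvalue : ∫ t in Ioi 0, exp (-(p * t)) * (t ^ (s - 1) / Gamma s * exp (-t)) =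
      exp (-log (1 + p) * s) := by
    simp only [hmerge]
    rw [integral_div, integral_rpow_mul_exp_neg_mul_Ioi hs hp,
      mul_div_cancel_right₀ _ (Gamma_pos_of_pos hs).ne', rpow_def_of_pos (by positivity),
      one_div, log_inv]
  exact ⟨.of_integral_ne_zero (hvalue.trans_ne (exp_ne_zero _)), hvalue⟩

lemma aestronglyMeasurable_rpow_div_Gamma_mul_exp_neg :
    AEStronglyMeasurable (Function.uncurry fun t s : ℝ => t ^ (s - 1) / Gamma s * exp (-t))
      ((volume.restrict (Ioi 0)).prod (volume.restrict (Ioi 0))) := by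
  rw [Measure.prod_restrict]
  refine ContinuousOn.aestronglyMeasurable ?_ (measurableSet_Ioi.prod measurableSet_Ioi)
  have hGamma : ContinuousOn (fun z : ℝ × ℝ => Gamma z.2) (Ioi 0 ×ˢ Ioi 0) :=
    differentiableOn_Gamma_Ioi.continuousOn.comp continuousOn_snd fun z hz => hz.2
  have hrpow : ContinuousOn (fun z : ℝ × ℝ => z.1 ^ (z.2 - 1)) (Ioi 0 ×ˢ Ioi 0) :=
    continuousOn_fst.rpow (by fun_prop) fun z hz => .inl (ne_of_gt hz.1)
  exact (hrpow.div hGamma fun z hz => (Gamma_pos_of_pos hz.2).ne').mul (by fun_prop)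

theorem hasLaplace_Ffun (hp : 0 < p) : HasLaplace Ffun p (1 / log (1 + p)) := by
  have hlog : -log (1 + p) < 0 := neg_lt_zero.2 (log_pos (by linarith))
  have hpos : ∀ᵐ s ∂volume.restrict (Ioi (0 : ℝ)), 0 < s := ae_restrict_mem measurableSet_Ioi
  have hvalue : ∫ s in Ioi 0, exp (-log (1 + p) * s) = 1 / log (1 + p) := by
    rw [integral_exp_mul_Ioi hlog, mul_zero, exp_zero, neg_div_neg_eq]
  rw [← hvalue]
  exact (hasLaplace_integral_of_nonneg aestronglyMeasurable_rpow_div_Gamma_mul_exp_neg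
    (hpos.mono fun s hs t ht => by have := Gamma_pos_of_pos hs; positivity)
    (hpos.mono fun s hs => hasLaplace_rpow_div_Gamma_mul_exp_neg hs (by linarith))
    (integrableOn_exp_mul_Ioi hlog 0)).congr fun t _ => integral_mul_const _ _

lemma hasLaplace_Ffun_comp_div (hα : 0 < α) (hp : 0 < p) :
    HasLaplace (fun t => Ffun (t / α)) p (α / log (1 + α * p)) := by
  simpa only [mul_one_div] using (hasLaplace_Ffun (mul_pos hα hp)).comp_div hα

lemma hasLaplace_one_div_mul_E1_comp_div (hα : 0 < α) (hp : 0 < p) :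
    HasLaplace (fun t => 1 / α * E1 (t / α)) p (log (1 + α * p) / (α * p)) := by
  simpa only [one_div, inv_mul_cancel_left₀ hα.ne'] using
    ((hasLaplace_E1 (mul_pos hα hp)).comp_div hα).const_mul (1 / α)

theorem volterra_Ffun_E1_ae_eq_one (hα : 0 < α) :
    ∀ᵐ t ∂volume.restrict (Ioi 0),
      volterra (fun t => Ffun (t / α)) (fun t => 1 / α * E1 (t / α)) t = 1 := by
  refine ae_eq_of_hasLaplace (p := 1) (L := fun q => 1 / q) (fun q hq => ?_)
    (fun q hq => hasLaplace_one (one_pos.trans_le hq))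
  have hq : 0 < q := one_pos.trans_le hq
  have hlog : log (1 + α * q) ≠ 0 := (log_pos (by linarith [mul_pos hα hq])).ne'
  have hprod : α / log (1 + α * q) * (log (1 + α * q) / (α * q)) = 1 / q := by field_simp
  rw [← hprod]
  exact (hasLaplace_Ffun_comp_div hα hq).volterra (hasLaplace_one_div_mul_E1_comp_div hα hq)

end Kernels

section FractionalIntegrals

variable {f : ℝ → ℝ} {α : ℝ}

lemma H0_eq_volterra (α : ℝ) (f : ℝ → ℝ) : H0 α f = volterra (fun t => Ffun (t / α)) f := rfl

lemma S0_eq_volterra (α : ℝ) (f : ℝ → ℝ) :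
    S0 α f = volterra (fun t => 1 / α * E1 (t / α)) f :=
  funext fun _ => (volterra_const_mul_left (1 / α) (fun t => E1 (t / α)) f).symm

theorem H0_S0_ae_eq_integral {T : ℝ} (hα : 0 < α) (hf : IntegrableOn f (Icc 0 T)) :
    ∀ᵐ x ∂volume.restrict (Icc 0 T), H0 α (S0 α f) x = ∫ y in (0 : ℝ)..x, f y := by
  rw [S0_eq_volterra, H0_eq_volterra]
  exact volterra_volterra_ae_eq_integral
    (hasLaplace_Ffun_comp_div hα one_pos).laplaceIntegrable
    (hasLaplace_one_div_mul_E1_comp_div hα one_pos).laplaceIntegrable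
    (volterra_Ffun_E1_ae_eq_one hα) hf

theorem S0_H0_ae_eq_integral {T : ℝ} (hα : 0 < α) (hf : IntegrableOn f (Icc 0 T)) :
    ∀ᵐ x ∂volume.restrict (Icc 0 T), S0 α (H0 α f) x = ∫ y in (0 : ℝ)..x, f y := by
  rw [S0_eq_volterra, H0_eq_volterra]
  refine volterra_volterra_ae_eq_integral
    (hasLaplace_one_div_mul_E1_comp_div hα one_pos).laplaceIntegrable
    (hasLaplace_Ffun_comp_div hα one_pos).laplaceIntegrable ?_ hf
  rw [volterra_comm]
  exact volterra_Ffun_E1_ae_eq_one hα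

lemma integral_eq_volterra_comp_sub_left (k f : ℝ → ℝ) (x b : ℝ) :
    ∫ y in x..b, k (y - x) * f y = volterra k (fun z => f (b - z)) (b - x) := by
  have h := intervalIntegral.integral_comp_sub_left (a := 0) (b := b - x)
    (fun y => k (y - x) * f y) b
  rw [sub_sub_cancel, sub_zero] at h
  simp only [← h, volterra, sub_right_comm b _ x]

lemma H1_eq_H0_comp_one_sub (α : ℝ) (f : ℝ → ℝ) (x : ℝ) :
    H1 α f x = H0 α (fun z => f (1 - z)) (1 - x) :=
  integral_eq_volterra_comp_sub_left (fun t => Ffun (t / α)) f x 1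

lemma S1_eq_S0_comp_one_sub (α : ℝ) (f : ℝ → ℝ) (x : ℝ) :
    S1 α f x = S0 α (fun z => f (1 - z)) (1 - x) :=
  congrArg (1 / α * ·) (integral_eq_volterra_comp_sub_left (fun t => E1 (t / α)) f x 1)

lemma H1_S1_eq_H0_S0_comp_one_sub (α : ℝ) (f : ℝ → ℝ) (x : ℝ) :
    H1 α (S1 α f) x = H0 α (S0 α fun z => f (1 - z)) (1 - x) := by
  simp only [H1_eq_H0_comp_one_sub, S1_eq_S0_comp_one_sub, sub_sub_cancel]

lemma S1_H1_eq_S0_H0_comp_one_sub (α : ℝ) (f : ℝ → ℝ) (x : ℝ) :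
    S1 α (H1 α f) x = S0 α (H0 α fun z => f (1 - z)) (1 - x) := by
  simp only [H1_eq_H0_comp_one_sub, S1_eq_S0_comp_one_sub, sub_sub_cancel]

lemma measurePreserving_sub_left_Icc (b : ℝ) :
    MeasurePreserving (fun x => b - x) (volume.restrict (Icc 0 b)) (volume.restrict (Icc 0 b)) := by
  simpa using (Measure.measurePreserving_sub_left volume b).restrict_preimage_emb
    (MeasurableEquiv.subLeft b).measurableEmbedding (Icc 0 b)

end FractionalIntegrals

end

/-- for `α > 0` and `f ∈ L¹([0,1])`,
`H_0^α(S_0^α f) = S_0^α(H_0^α f) = ∫_0^x f` and `H_1^α(S_1^α f) = S_1^α(H_1^α f) = ∫_x^1 f`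
a.e. on `[0,1]`. -/
theorem stmt16 (α : ℝ) (hα : 0 < α) (f : ℝ → ℝ) (hf : IntegrableOn f (Icc (0:ℝ) 1)) :
    (∀ᵐ x ∂(volume.restrict (Icc (0:ℝ) 1)),
      H0 α (S0 α f) x = ∫ y in (0:ℝ)..x, f y ∧ S0 α (H0 α f) x = ∫ y in (0:ℝ)..x, f y) ∧
    (∀ᵐ x ∂(volume.restrict (Icc (0:ℝ) 1)),
      H1 α (S1 α f) x = ∫ y in x..(1:ℝ), f y ∧ S1 α (H1 α f) x = ∫ y in x..(1:ℝ), f y) := by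
  refine ⟨(H0_S0_ae_eq_integral hα hf).and (S0_H0_ae_eq_integral hα hf), ?_⟩
  have hreflect : IntegrableOn (fun z => f (1 - z)) (Icc 0 1) :=
    (measurePreserving_sub_left_Icc 1).integrable_comp_of_integrable hf
  filter_upwards [(measurePreserving_sub_left_Icc 1).quasiMeasurePreserving.ae
    ((H0_S0_ae_eq_integral hα hreflect).and (S0_H0_ae_eq_integral hα hreflect))] with x hx
  have hint : ∫ y in (0:ℝ)..(1 - x), f (1 - y) = ∫ y in x..(1:ℝ), f y := by
    rw [intervalIntegral.integral_comp_sub_left, sub_sub_cancel, sub_zero]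
  rw [H1_S1_eq_H0_S0_comp_one_sub, S1_H1_eq_S0_H0_comp_one_sub, ← hint]
  exact hx

end
end

section
/- Let θ > 1 and let f : [0,1] → ℝ be absolutely continuous, i.e. f(x) = f(0) + ∫_0^x g(y) dy for all x ∈ [0,1] for some g ∈ L¹([0,1];ℝ). Then, with X = x/(θ−1), for a.e. x ∈ [0,1] one has (S_0^{θ−1} f)(x) = f(0)·[X E₁(X) − e^{−X} + 1] + ∫_0^x (S_0^{θ−1} g)(y) dy; consequently S_0^{θ−1} f has an absolutely continuous representative whose derivative satisfies, for a.e. x ∈ [0,1], (D_0^θ f)(x) = f(0) · (1/(θ−1)) E₁(x/(θ−1)) + ∫_0^x (1/(θ−1)) E₁((x−y)/(θ−1)) g(y) dy. -/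
open MeasureTheory Set

noncomputable section

/-!
`S_0^α` is the convolution on `[0, x]` with the kernel `k(t) = (1/α) E₁(t/α)`. By Fubini such a
convolution commutes with integration from `0`, so `S_0^α` of `y ↦ ∫_0^y g` is `∫_0^x S_0^α g`,
while `S_0^α` of the constant `f(0)` is `f(0)` times the primitive of `k`. That primitive is
computed by the fundamental theorem of calculus; the singularity of `E₁` at `0` is harmless since
`1/t ≤ x^{−s} t^{s−1}` for `t ≥ x` gives `E₁(x) ≤ x^{−s} Γ(s)`, so `x E₁(x) → 0` by taking `s < 1`.
The derivative formula is then the Lebesgue differentiation theorem for `S_0^α g ∈ L¹`.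
-/

open Filter Topology
open scoped Convolution

section Convolution

variable {E E' F : Type*} [NormedAddCommGroup E] [NormedSpace ℝ E] [NormedAddCommGroup E']
  [NormedSpace ℝ E'] [NormedAddCommGroup F] [NormedSpace ℝ F] {f : ℝ → E} {g : ℝ → E'} {b : ℝ}

theorem setIntegral_Iic_comp_sub_right (g : ℝ → E') (x t : ℝ) :
    ∫ y in Iic x, g (y - t) = ∫ s in Iic (x - t), g s := by
  have h := (measurePreserving_sub_right volume t).setIntegral_preimage_emb
    (MeasurableEquiv.subRight t).measurableEmbedding g (Iic (x - t))
  rwa [preimage_sub_const_Iic, sub_add_cancel] at h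

theorem setIntegral_Iic_convolution [CompleteSpace E'] [CompleteSpace F] (L : E →L[ℝ] E' →L[ℝ] F)
    (hf : Integrable f) (hg : Integrable g) (x : ℝ) :
    ∫ y in Iic x, (f ⋆[L] g) y = (f ⋆[L] fun t ↦ ∫ s in Iic t, g s) x := by
  have hfg : Integrable (fun p : ℝ × ℝ ↦ L (f p.2) (g (p.1 - p.2)))
      ((volume.restrict (Iic x)).prod volume) :=
    (hf.convolution_integrand L hg).mono_measure (Measure.prod_mono Measure.restrict_le_self le_rfl)
  calc ∫ y in Iic x, (f ⋆[L] g) y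
      = ∫ t, ∫ y in Iic x, L (f t) (g (y - t)) := integral_integral_swap hfg
    _ = ∫ t, L (f t) (∫ s in Iic (x - t), g s) := by
        congr with t
        rw [(L (f t)).integral_comp_comm (hg.comp_sub_right t).integrableOn,
          setIntegral_Iic_comp_sub_right]

theorem convolution_indicator_Ioc (L : E →L[ℝ] E' →L[ℝ] F) (f : ℝ → E) (g : ℝ → E') (b : ℝ) :
    (Ioc 0 b).indicator f ⋆[L] (Ioc 0 b).indicator g =
      posConvolution ((Iic b).indicator f) ((Iic b).indicator g) L := by
  rw [posConvolution_eq_convolution_indicator _ _ L volume, indicator_indicator,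
    indicator_indicator, Ioi_inter_Iic]

theorem convolution_indicator_Ioc_apply (L : E →L[ℝ] E' →L[ℝ] F) (f : ℝ → E) (g : ℝ → E') {x : ℝ}
    (hx : x ∈ Ioc 0 b) :
    ((Ioc 0 b).indicator f ⋆[L] (Ioc 0 b).indicator g) x = ∫ t in 0..x, L (f t) (g (x - t)) := by
  rw [convolution_indicator_Ioc, posConvolution, indicator_of_mem (mem_Ioi.2 hx.1)]
  refine intervalIntegral.integral_congr fun t ht ↦ ?_
  rw [uIcc_of_le hx.1.le] at ht
  rw [indicator_of_mem (show t ∈ Iic b from ht.2.trans hx.2),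
    indicator_of_mem (show x - t ∈ Iic b from (sub_le_self x ht.1).trans hx.2)]

theorem intervalIntegrable_integral_bilin_comp_sub (L : E →L[ℝ] E' →L[ℝ] F) (hb : 0 ≤ b)
    (hf : IntervalIntegrable f volume 0 b) (hg : IntervalIntegrable g volume 0 b) :
    IntervalIntegrable (fun x ↦ ∫ t in 0..x, L (f t) (g (x - t))) volume 0 b := by
  rw [intervalIntegrable_iff_integrableOn_Ioc_of_le hb] at hf hg ⊢
  have hconv := (hf.integrable_indicator measurableSet_Ioc).integrable_convolution L
    (hg.integrable_indicator measurableSet_Ioc)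
  exact hconv.integrableOn.congr_fun (fun x hx ↦ convolution_indicator_Ioc_apply L f g hx)
    measurableSet_Ioc

theorem setIntegral_Iic_indicator_Ioc {t : ℝ} (ht : t ∈ Icc 0 b) (g : ℝ → E') :
    ∫ s in Iic t, (Ioc 0 b).indicator g s = ∫ s in 0..t, g s := by
  rw [setIntegral_indicator measurableSet_Ioc, inter_comm, Ioc_inter_Iic, inf_eq_right.2 ht.2,
    intervalIntegral.integral_of_le ht.1]

theorem setIntegral_Iic_convolution_indicator_Ioc (L : E →L[ℝ] E' →L[ℝ] F) (f : ℝ → E)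
    (g : ℝ → E') (hb : 0 ≤ b) :
    ∫ x in Iic b, ((Ioc 0 b).indicator f ⋆[L] (Ioc 0 b).indicator g) x =
      ∫ x in 0..b, ∫ t in 0..x, L (f t) (g (x - t)) := by
  rw [intervalIntegral.integral_of_le hb, ← setIntegral_congr_fun measurableSet_Ioc fun x hx ↦
    convolution_indicator_Ioc_apply L f g hx]
  refine setIntegral_eq_of_subset_of_forall_sdiff_eq_zero measurableSet_Iic Ioc_subset_Iic_self
    fun x hx ↦ ?_
  have hx₀ : x ∉ Ioi 0 := fun hpos ↦ hx.2 ⟨hpos, hx.1⟩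
  rw [convolution_indicator_Ioc, posConvolution, indicator_of_notMem hx₀]

theorem integral_integral_bilin_comp_sub [CompleteSpace E'] [CompleteSpace F]
    (L : E →L[ℝ] E' →L[ℝ] F) (hb : 0 ≤ b)
    (hf : IntervalIntegrable f volume 0 b) (hg : IntervalIntegrable g volume 0 b) :
    ∫ x in 0..b, ∫ t in 0..x, L (f t) (g (x - t)) =
      ∫ t in 0..b, L (f t) (∫ s in 0..(b - t), g s) := by
  rw [intervalIntegrable_iff_integrableOn_Ioc_of_le hb] at hf hg
  have hf₀ := hf.integrable_indicator measurableSet_Ioc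
  have hg₀ := hg.integrable_indicator measurableSet_Ioc
  rw [← setIntegral_Iic_convolution_indicator_Ioc L f g hb, setIntegral_Iic_convolution L hf₀ hg₀,
    intervalIntegral.integral_of_le hb, convolution_def,
    ← setIntegral_eq_integral_of_forall_compl_eq_zero (s := Ioc 0 b) fun t ht ↦ by
      rw [indicator_of_notMem ht, map_zero, zero_apply]]
  refine setIntegral_congr_fun measurableSet_Ioc fun t ht ↦ ?_
  have hbt : b - t ∈ Icc 0 b := ⟨sub_nonneg.2 ht.2, sub_le_self b ht.1.le⟩
  rw [indicator_of_mem ht, setIntegral_Iic_indicator_Ioc hbt]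

end Convolution

section ExponentialIntegral

theorem exp_neg_div_le_rpow_neg_mul {s x t : ℝ} (hs : 0 ≤ s) (hx : 0 < x) (hxt : x ≤ t) :
    Real.exp (-t) / t ≤ x ^ (-s) * (Real.exp (-t) * t ^ (s - 1)) := by
  have ht : 0 < t := hx.trans_le hxt
  calc Real.exp (-t) / t = t ^ (-s) * (Real.exp (-t) * t ^ (s - 1)) := by
        rw [mul_left_comm, ← Real.rpow_add ht, neg_add_eq_sub, sub_sub_cancel_left,
          Real.rpow_neg_one, div_eq_mul_inv]
    _ ≤ x ^ (-s) * (Real.exp (-t) * t ^ (s - 1)) := by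
        gcongr ?_ * _
        exact Real.rpow_le_rpow_of_nonpos hx hxt (neg_nonpos.2 hs)

theorem integrableOn_exp_neg_div_Ioi {x : ℝ} (hx : 0 < x) :
    IntegrableOn (fun t ↦ Real.exp (-t) / t) (Ioi x) := by
  have hΓ : IntegrableOn (fun t ↦ x ^ (-1 : ℝ) * (Real.exp (-t) * t ^ ((1 : ℝ) - 1))) (Ioi x) :=
    ((Real.GammaIntegral_convergent one_pos).mono_set (Ioi_subset_Ioi hx.le)).const_mul _
  refine Integrable.mono' hΓ (Measurable.aestronglyMeasurable (by fun_prop)) ?_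
  filter_upwards [ae_restrict_mem measurableSet_Ioi] with t hxt
  have ht : 0 < t := hx.trans hxt
  rw [Real.norm_of_nonneg (by positivity)]
  exact exp_neg_div_le_rpow_neg_mul zero_le_one hx (le_of_lt hxt)

theorem E1_nonneg {x : ℝ} (hx : 0 ≤ x) : 0 ≤ E1 x :=
  setIntegral_nonneg measurableSet_Ioi fun _ ht ↦ div_nonneg (Real.exp_nonneg _) (hx.trans ht.le)

theorem E1_le_rpow_neg_mul_Gamma {s x : ℝ} (hs : 0 < s) (hx : 0 < x) :
    E1 x ≤ x ^ (-s) * Real.Gamma s := by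
  have hΓ := Real.GammaIntegral_convergent hs
  calc E1 x ≤ ∫ t in Ioi x, x ^ (-s) * (Real.exp (-t) * t ^ (s - 1)) :=
        setIntegral_mono_on (integrableOn_exp_neg_div_Ioi hx)
          ((hΓ.mono_set (Ioi_subset_Ioi hx.le)).const_mul _) measurableSet_Ioi
          fun t hxt ↦ exp_neg_div_le_rpow_neg_mul hs.le hx (le_of_lt hxt)
    _ = x ^ (-s) * ∫ t in Ioi x, Real.exp (-t) * t ^ (s - 1) := integral_const_mul _ _
    _ ≤ x ^ (-s) * ∫ t in Ioi 0, Real.exp (-t) * t ^ (s - 1) := by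
        gcongr ?_ * ?_
        refine setIntegral_mono_set hΓ ?_ (Ioi_subset_Ioi hx.le).eventuallyLE
        filter_upwards [ae_restrict_mem measurableSet_Ioi] with t ht
        exact mul_nonneg (Real.exp_nonneg _) (Real.rpow_nonneg (le_of_lt ht) _)
    _ = x ^ (-s) * Real.Gamma s := by rw [Real.Gamma_eq_integral hs]

theorem hasDerivAt_E1 {x : ℝ} (hx : 0 < x) : HasDerivAt E1 (-(Real.exp (-x) / x)) x := by
  have hcont : ContinuousOn (fun t : ℝ ↦ Real.exp (-t) / t) (Ioi 0) :=
    ContinuousOn.div (by fun_prop) (by fun_prop) fun _ ht ↦ ne_of_gt ht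
  have hint : HasDerivAt (fun u ↦ ∫ t in x..u, Real.exp (-t) / t) (Real.exp (-x) / x) x :=
    intervalIntegral.integral_hasDerivAt_right (by simp)
      (hcont.stronglyMeasurableAtFilter isOpen_Ioi x hx) (hcont.continuousAt (Ioi_mem_nhds hx))
  refine (hint.const_sub (E1 x)).congr_of_eventuallyEq ?_
  filter_upwards [Ioi_mem_nhds hx] with u hu
  exact eq_sub_of_add_eq' (intervalIntegral.integral_interval_add_Ioi
    (integrableOn_exp_neg_div_Ioi hx) (integrableOn_exp_neg_div_Ioi hu))

theorem tendsto_mul_E1_nhdsGT_zero : Tendsto (fun x ↦ x * E1 x) (𝓝[>] 0) (𝓝 0) := by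
  have hbound : Tendsto (fun x : ℝ ↦ x ^ (1 / 2 : ℝ) * Real.Gamma (1 / 2)) (𝓝[>] 0) (𝓝 0) := by
    have hcont : Continuous fun x : ℝ ↦ x ^ (1 / 2 : ℝ) * Real.Gamma (1 / 2) := by
      fun_prop (disch := norm_num)
    exact (hcont.tendsto' 0 0 (by simp)).mono_left nhdsWithin_le_nhds
  refine squeeze_zero' ?_ ?_ hbound <;> filter_upwards [self_mem_nhdsWithin] with x (hx : 0 < x)
  · exact mul_nonneg hx.le (E1_nonneg hx.le)
  · calc x * E1 x ≤ x * (x ^ (-(1 / 2) : ℝ) * Real.Gamma (1 / 2)) := by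
          gcongr
          exact E1_le_rpow_neg_mul_Gamma one_half_pos hx
      _ = x ^ (1 / 2 : ℝ) * Real.Gamma (1 / 2) := by
          rw [← mul_assoc, ← Real.rpow_one_add' hx.le (by norm_num)]
          norm_num

/-- The primitive `x ↦ x E₁(x) − e^{−x} + 1` of `E₁` on `[0, ∞)` that vanishes at `0`. -/
def E1Primitive (x : ℝ) : ℝ := x * E1 x - Real.exp (-x) + 1

theorem E1Primitive_zero : E1Primitive 0 = 0 := by simp [E1Primitive]

theorem hasDerivAt_E1Primitive {x : ℝ} (hx : 0 < x) : HasDerivAt E1Primitive (E1 x) x := by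
  have h : HasDerivAt E1Primitive _ x :=
    (((hasDerivAt_id x).mul (hasDerivAt_E1 hx)).sub (hasDerivAt_neg x).exp).add_const 1
  refine h.congr_deriv ?_
  simp only [id_eq]
  field

theorem continuousOn_E1Primitive : ContinuousOn E1Primitive (Ici 0) := by
  have hzero : ContinuousWithinAt E1Primitive (Ioi 0) 0 := by
    have hexp : Tendsto (fun x ↦ Real.exp (-x)) (𝓝[>] 0) (𝓝 1) :=
      (Continuous.tendsto' (by fun_prop) 0 1 (by simp)).mono_left nhdsWithin_le_nhds
    have h := (tendsto_mul_E1_nhdsGT_zero.sub hexp).add_const 1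
    rw [zero_sub, neg_add_cancel] at h
    rwa [ContinuousWithinAt, E1Primitive_zero]
  intro x hx
  rcases eq_or_lt_of_le (mem_Ici.1 hx) with rfl | hpos
  · exact continuousWithinAt_Ioi_iff_Ici.1 hzero
  · exact (hasDerivAt_E1Primitive hpos).continuousAt.continuousWithinAt

theorem intervalIntegrable_E1 {b : ℝ} (hb : 0 ≤ b) : IntervalIntegrable E1 volume 0 b :=
  (intervalIntegrable_iff_integrableOn_Ioc_of_le hb).2 <|
    intervalIntegral.integrableOn_deriv_of_nonneg
      (continuousOn_E1Primitive.mono Icc_subset_Ici_self)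
      (fun _ hx ↦ hasDerivAt_E1Primitive hx.1) fun _ hx ↦ E1_nonneg hx.1.le

theorem integral_E1 {b : ℝ} (hb : 0 ≤ b) : ∫ t in 0..b, E1 t = E1Primitive b := by
  rw [intervalIntegral.integral_eq_sub_of_hasDerivAt_of_le hb
    (continuousOn_E1Primitive.mono Icc_subset_Ici_self)
    (fun _ hx ↦ hasDerivAt_E1Primitive hx.1) (intervalIntegrable_E1 hb), E1Primitive_zero, sub_zero]

end ExponentialIntegral

section FractionalIntegral

/-- The kernel `t ↦ (1/α) E₁(t/α)` of the fractional integral `S_0^α`. -/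
def S0Kernel (α t : ℝ) : ℝ := 1 / α * E1 (t / α)

variable {α b x : ℝ} {f g : ℝ → ℝ}

theorem S0_eq_integral_S0Kernel_sub_mul (α : ℝ) (f : ℝ → ℝ) (x : ℝ) :
    S0 α f x = ∫ y in 0..x, S0Kernel α (x - y) * f y := by
  simp only [S0, S0Kernel, mul_assoc, intervalIntegral.integral_const_mul]

theorem S0_eq_integral_S0Kernel_mul (α : ℝ) (f : ℝ → ℝ) (x : ℝ) :
    S0 α f x = ∫ t in 0..x, S0Kernel α t * f (x - t) := by
  simpa [S0_eq_integral_S0Kernel_sub_mul] using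
    intervalIntegral.integral_comp_sub_left (a := 0) (b := x) (fun t ↦ S0Kernel α t * f (x - t)) x

theorem intervalIntegrable_S0Kernel (hα : 0 < α) (hb : 0 ≤ b) :
    IntervalIntegrable (S0Kernel α) volume 0 b := by
  have h := (intervalIntegrable_E1 (div_nonneg hb hα.le)).comp_mul_right (c := α⁻¹)
  simp only [div_inv_eq_mul, zero_mul, div_mul_cancel₀ b hα.ne', ← div_eq_mul_inv] at h
  exact h.const_mul _

theorem integral_S0Kernel (hα : 0 < α) (hb : 0 ≤ b) :
    ∫ t in 0..b, S0Kernel α t = E1Primitive (b / α) := by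
  have h := intervalIntegral.inv_smul_integral_comp_div (a := 0) (b := b) (f := E1) α
  rw [zero_div, integral_E1 (div_nonneg hb hα.le)] at h
  simpa [S0Kernel] using h

theorem hasDerivAt_E1Primitive_div (hα : 0 < α) (hx : 0 < x) :
    HasDerivAt (fun t ↦ E1Primitive (t / α)) (S0Kernel α x) x := by
  have hE : HasDerivAt E1Primitive (E1 (x / α)) (x / α) := hasDerivAt_E1Primitive (div_pos hx hα)
  have hdiv : HasDerivAt (fun t ↦ t / α) (1 / α) x := (hasDerivAt_id x).div_const α
  exact (hE.comp x hdiv).congr_deriv (mul_comm _ _)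

theorem intervalIntegrable_S0 (hα : 0 < α) (hb : 0 ≤ b) (hg : IntervalIntegrable g volume 0 b) :
    IntervalIntegrable (S0 α g) volume 0 b := by
  simpa only [← S0_eq_integral_S0Kernel_mul, ContinuousLinearMap.mul_apply'] using
    intervalIntegrable_integral_bilin_comp_sub (.mul ℝ ℝ) hb (intervalIntegrable_S0Kernel hα hb) hg

theorem integral_S0 (hα : 0 < α) (hb : 0 ≤ b) (hg : IntervalIntegrable g volume 0 b) :
    ∫ x in 0..b, S0 α g x = S0 α (fun x ↦ ∫ y in 0..x, g y) b := by
  simp only [S0_eq_integral_S0Kernel_mul]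
  exact integral_integral_bilin_comp_sub (.mul ℝ ℝ) hb
    (intervalIntegrable_S0Kernel hα hb) hg

theorem S0_const (hα : 0 < α) (hx : 0 ≤ x) (c : ℝ) :
    S0 α (fun _ ↦ c) x = c * E1Primitive (x / α) := by
  rw [S0_eq_integral_S0Kernel_mul, intervalIntegral.integral_mul_const, integral_S0Kernel hα hx,
    mul_comm]

theorem S0_add_of_continuousOn (hα : 0 < α) (hx : 0 ≤ x) (hf : ContinuousOn f (Icc 0 x))
    (hg : ContinuousOn g (Icc 0 x)) :
    S0 α (fun y ↦ f y + g y) x = S0 α f x + S0 α g x := by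
  have hk : IntervalIntegrable (fun y ↦ S0Kernel α (x - y)) volume 0 x := by
    simpa using ((intervalIntegrable_S0Kernel hα hx).comp_sub_left x).symm
  rw [← uIcc_of_le hx] at hf hg
  simp only [S0_eq_integral_S0Kernel_sub_mul, mul_add]
  exact intervalIntegral.integral_add (hk.mul_continuousOn hf) (hk.mul_continuousOn hg)

theorem S0_congr (hx : 0 ≤ x) (hfg : EqOn f g (Icc 0 x)) : S0 α f x = S0 α g x := by
  rw [← uIcc_of_le hx] at hfg
  simp only [S0_eq_integral_S0Kernel_sub_mul]
  refine intervalIntegral.integral_congr fun y hy ↦ ?_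
  rw [hfg hy]

theorem S0_eq_of_eq_const_add_integral {c : ℝ} (hα : 0 < α) (hx : 0 ≤ x)
    (hg : IntervalIntegrable g volume 0 x) (hf : ∀ y ∈ Icc 0 x, f y = c + ∫ z in 0..y, g z) :
    S0 α f x = c * E1Primitive (x / α) + ∫ y in 0..x, S0 α g y := by
  have hG : ContinuousOn (fun y ↦ ∫ z in 0..y, g z) (Icc 0 x) := by
    have hgI := (intervalIntegrable_iff_integrableOn_Icc_of_le hx).1 hg
    rw [← uIcc_of_le hx] at hgI ⊢
    exact intervalIntegral.continuousOn_primitive_interval hgI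
  rw [S0_congr hx hf, S0_add_of_continuousOn hα hx continuousOn_const hG, S0_const hα hx,
    integral_S0 hα hx hg]

theorem ae_hasDerivAt_const_mul_E1Primitive_add_integral_S0 (hα : 0 < α) (hb : 0 ≤ b) (c : ℝ)
    (hg : IntervalIntegrable g volume 0 b) :
    ∀ᵐ x ∂volume.restrict (Icc 0 b),
      HasDerivAt (fun t ↦ c * E1Primitive (t / α) + ∫ y in 0..t, S0 α g y)
        (c * S0Kernel α x + S0 α g x) x := by
  filter_upwards [ae_restrict_of_ae (intervalIntegrable_S0 hα hb hg).ae_hasDerivAt_integral,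
    ae_restrict_of_ae (Measure.ae_ne volume 0), ae_restrict_mem measurableSet_Icc]
    with x hderiv hne hx
  rw [uIcc_of_le hb] at hderiv
  exact ((hasDerivAt_E1Primitive_div hα (hx.1.lt_of_ne' hne)).const_mul c).add
    (hderiv hx 0 (left_mem_Icc.2 hb))

end FractionalIntegral

/-- let `θ > 1` and let `f` be absolutely continuous on `[0,1]`, say
`f(x) = f(0) + ∫_0^x g(y) dy` with `g ∈ L¹([0,1])`. Then, with `X = x/(θ−1)`, a.e. on `[0,1]`
`(S_0^{θ−1} f)(x) = f(0)[X E₁(X) − e^{−X} + 1] + ∫_0^x (S_0^{θ−1} g)(y) dy`; so the function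
`Φ(x) = f(0)[X E₁(X) − e^{−X} + 1] + ∫_0^x (S_0^{θ−1} g)(y) dy` is an absolutely continuous
representative of `S_0^{θ−1} f` and for a.e. `x ∈ [0,1]`,
`(D_0^θ f)(x) = Φ'(x) = f(0) (1/(θ−1)) E₁(x/(θ−1)) + ∫_0^x (1/(θ−1)) E₁((x−y)/(θ−1)) g(y) dy`. -/
theorem stmt18 (θ : ℝ) (hθ : 1 < θ) (f g : ℝ → ℝ) (hg : IntegrableOn g (Icc (0:ℝ) 1))
    (hf : ∀ x ∈ Icc (0:ℝ) 1, f x = f 0 + ∫ y in (0:ℝ)..x, g y) :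
    (∀ᵐ x ∂(volume.restrict (Icc (0:ℝ) 1)),
      S0 (θ - 1) f x =
        f 0 * ((x / (θ - 1)) * E1 (x / (θ - 1)) - Real.exp (-(x / (θ - 1))) + 1) +
          ∫ y in (0:ℝ)..x, S0 (θ - 1) g y) ∧
    (∀ᵐ x ∂(volume.restrict (Icc (0:ℝ) 1)),
      HasDerivAt
        (fun t => f 0 * ((t / (θ - 1)) * E1 (t / (θ - 1)) - Real.exp (-(t / (θ - 1))) + 1) +
          ∫ y in (0:ℝ)..t, S0 (θ - 1) g y)
        (f 0 * ((1 / (θ - 1)) * E1 (x / (θ - 1))) +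
          ∫ y in (0:ℝ)..x, (1 / (θ - 1)) * E1 ((x - y) / (θ - 1)) * g y) x) := by
  have hα : 0 < θ - 1 := sub_pos.2 hθ
  have hg' : IntervalIntegrable g volume 0 1 :=
    (intervalIntegrable_iff_integrableOn_Icc_of_le zero_le_one).2 hg
  constructor
  · filter_upwards [ae_restrict_mem measurableSet_Icc] with x hx
    have hsub : Icc 0 x ⊆ Icc 0 1 := Icc_subset_Icc_right hx.2
    have hgx : IntervalIntegrable g volume 0 x :=
      (intervalIntegrable_iff_integrableOn_Icc_of_le hx.1).2 (hg.mono_set hsub)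
    exact S0_eq_of_eq_const_add_integral hα hx.1 hgx fun y hy ↦ hf y (hsub hy)
  · filter_upwards [ae_hasDerivAt_const_mul_E1Primitive_add_integral_S0 hα zero_le_one (f 0) hg']
      with x hx
    rwa [S0_eq_integral_S0Kernel_sub_mul] at hx

end
end
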